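/- arXiv:0801.0174 — 6 statements merged into one kernel-verified Lean document; each statement's English description precedes it below -/
import Mathlib

section
/- Consider a commutative diagram of abelian groups whose two (identical-shaped) rows are exact sequences 0 → A →f B →g C →h D → 0, with vertical endomorphisms a : A → A, b : B → B, c : C → C, d : D → D satisfying f ∘ a = b ∘ f, g ∘ b = c ∘ g, and h ∘ c = d ∘ h. If A, C and D are free and finitely generated ℤ-modules, then B is also a free and finitely generated ℤ-module, and the determinants of the vertical endomorphisms satisfy det(a)·det(c) = det(b)·det(d). -/
theorem ses_aux {R A B C : Type} [CommRing R] [IsDomain R] [IsPrincipalIdealRing R] [AddCommGroup A] [Module R A] [AddCommGroup B] [Module R B]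
    [AddCommGroup C] [Module R C] [Module.Free R A] [Module.Finite R A]
    [Module.Free R C] [Module.Finite R C]
    (f : A →ₗ[R] B) (g : B →ₗ[R] C)
    (a : A →ₗ[R] A) (b : B →ₗ[R] B) (c : C →ₗ[R] C)
    (hf : Function.Injective f)
    (hfg : LinearMap.range f = LinearMap.ker g)
    (hg : Function.Surjective g)
    (h1 : f.comp a = b.comp f)
    (h2 : g.comp b = c.comp g) :
    Module.Free R B ∧ Module.Finite R B ∧
      LinearMap.det b = LinearMap.det a * LinearMap.det c := by
  have hW : LinearMap.ker g ≤ (LinearMap.ker g).comap b := by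
    intro x hx
    have := LinearMap.congr_fun h2 x
    simp only [LinearMap.comp_apply, LinearMap.mem_ker, Submodule.mem_comap] at *
    rw [this, hx, map_zero]
  let e1 : A ≃ₗ[R] LinearMap.ker g :=
    (LinearEquiv.ofInjective f hf).trans (LinearEquiv.ofEq _ _ hfg)
  let e2 : (B ⧸ LinearMap.ker g) ≃ₗ[R] C := g.quotKerEquivOfSurjective hg
  have he1 : ∀ x, ((e1 x : LinearMap.ker g) : B) = f x := fun x => rfl
  haveI : Module.Free R (LinearMap.ker g) := Module.Free.of_equiv e1
  haveI : Module.Finite R (LinearMap.ker g) := Module.Finite.equiv e1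
  haveI : Module.Free R (B ⧸ LinearMap.ker g) := Module.Free.of_equiv e2.symm
  haveI : Module.Finite R (B ⧸ LinearMap.ker g) := Module.Finite.equiv e2.symm
  have hfin : Module.Finite R B := Module.Finite.of_submodule_quotient (LinearMap.ker g)
  have hfree : Module.Free R B := by
    have htf : Module.IsTorsionFree R B := by
      rw [Module.isTorsionFree_iff_smul_eq_zero]
      intro r x hx
      by_cases hr : r = 0
      · exact Or.inl hr
      right
      have hgx : g x = 0 := by
        have : r • g x = 0 := by rw [← map_smul, hx, map_zero]
        exact (smul_eq_zero.1 this).resolve_left hr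
      have hx' : x ∈ LinearMap.range f := by rw [hfg]; exact hgx
      obtain ⟨y, rfl⟩ := hx'
      have : r • y = 0 := hf (by rw [map_smul, hx, map_zero])
      rw [(smul_eq_zero.1 this).resolve_left hr, map_zero]
    infer_instance
  refine ⟨hfree, hfin, ?_⟩
  rw [LinearMap.det_eq_det_mul_det (LinearMap.ker g) b hW]
  congr 1
  · rw [← LinearMap.det_conj a e1]
    congr 1
    ext x
    obtain ⟨y, rfl⟩ := e1.surjective x
    have := LinearMap.congr_fun h1 y
    simpa [he1] using this.symm
  · rw [← LinearMap.det_conj _ e2]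
    congr 1
    ext x
    obtain ⟨y, rfl⟩ := hg x
    have hy : e2.symm (g y) = Submodule.Quotient.mk y := by
      rw [LinearEquiv.symm_apply_eq]; rfl
    have := LinearMap.congr_fun h2 y
    simp only [LinearMap.comp_apply, LinearEquiv.coe_coe, hy]
    exact this

theorem four_aux
    (R A B C D : Type) [CommRing R] [IsDomain R] [IsPrincipalIdealRing R] [AddCommGroup A] [Module R A] [AddCommGroup B] [Module R B]
    [AddCommGroup C] [Module R C] [AddCommGroup D] [Module R D]
    (f : A →ₗ[R] B) (g : B →ₗ[R] C) (h : C →ₗ[R] D)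
    (a : A →ₗ[R] A) (b : B →ₗ[R] B) (c : C →ₗ[R] C) (d : D →ₗ[R] D)
    (hf : Function.Injective f)
    (hfg : LinearMap.range f = LinearMap.ker g)
    (hgh : LinearMap.range g = LinearMap.ker h)
    (hh : Function.Surjective h)
    (hcomm₁ : f.comp a = b.comp f)
    (hcomm₂ : g.comp b = c.comp g)
    (hcomm₃ : h.comp c = d.comp h)
    (hAfree : Module.Free R A) (hAfin : Module.Finite R A)
    (hCfree : Module.Free R C) (hCfin : Module.Finite R C)
    (hDfree : Module.Free R D) (hDfin : Module.Finite R D) :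
    Module.Free R B ∧ Module.Finite R B ∧
      LinearMap.det a * LinearMap.det c = LinearMap.det b * LinearMap.det d := by
  have hr : ∀ x, g x ∈ LinearMap.ker h := fun x => hgh ▸ LinearMap.mem_range_self g x
  have hc : ∀ x ∈ LinearMap.ker h, c x ∈ LinearMap.ker h := by
    intro x hx
    have := LinearMap.congr_fun hcomm₃ x
    simp only [LinearMap.comp_apply, LinearMap.mem_ker] at *
    rw [this, hx, map_zero]
  obtain ⟨-, -, e1⟩ := ses_aux (LinearMap.ker h).subtype h (c.restrict hc) c d
    Subtype.val_injective (Submodule.range_subtype _) hh (by ext x; rfl) hcomm₃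
  obtain ⟨k1, k2, e2⟩ := ses_aux f (g.codRestrict _ hr) a b (c.restrict hc) hf
    (by rw [hfg, LinearMap.ker_codRestrict])
    (by
      rintro ⟨x, hx⟩
      rw [← hgh] at hx
      obtain ⟨y, rfl⟩ := hx
      exact ⟨y, rfl⟩) hcomm₁
    (by
      ext x
      exact LinearMap.congr_fun hcomm₂ x)
  exact ⟨k1, k2, by rw [e1, e2]; ring⟩

/-- Given a commutative diagram of abelian groups whose two rows are the
exact sequence `0 → A →f B →g C →h D → 0`, with vertical endomorphisms `a, b, c, d`
commuting with `f, g, h`: if `A`, `C` and `D` are free and finitely generated `ℤ`-modules,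
then so is `B`, and `det a * det c = det b * det d`. -/
theorem stmt0
    (A B C D : Type) [AddCommGroup A] [Module ℤ A] [AddCommGroup B] [Module ℤ B]
    [AddCommGroup C] [Module ℤ C] [AddCommGroup D] [Module ℤ D]
    (f : A →ₗ[ℤ] B) (g : B →ₗ[ℤ] C) (h : C →ₗ[ℤ] D)
    (a : A →ₗ[ℤ] A) (b : B →ₗ[ℤ] B) (c : C →ₗ[ℤ] C) (d : D →ₗ[ℤ] D)
    (hf : Function.Injective f)
    (hfg : LinearMap.range f = LinearMap.ker g)
    (hgh : LinearMap.range g = LinearMap.ker h)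
    (hh : Function.Surjective h)
    (hcomm₁ : f.comp a = b.comp f)
    (hcomm₂ : g.comp b = c.comp g)
    (hcomm₃ : h.comp c = d.comp h)
    (hAfree : Module.Free ℤ A) (hAfin : Module.Finite ℤ A)
    (hCfree : Module.Free ℤ C) (hCfin : Module.Finite ℤ C)
    (hDfree : Module.Free ℤ D) (hDfin : Module.Finite ℤ D) :
    Module.Free ℤ B ∧ Module.Finite ℤ B ∧
      LinearMap.det a * LinearMap.det c = LinearMap.det b * LinearMap.det d := by
  exact four_aux ℤ A B C D f g h a b c d hf hfg hgh hh hcomm₁ hcomm₂ hcomm₃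
    hAfree hAfin hCfree hCfin hDfree hDfin
end

section
/- Let 𝐇 be a non-unital Batalin–Vilkovisky algebra over F and let ℋ = (ℋ_n)_{n∈ℤ} be a ℤ-graded F-vector space, equipped for every n with F-linear maps E : 𝐇_n → ℋ_{n+ε}, S : ℋ_{n+ε} → ℋ_{n+ε−2}, and M : ℋ_{n+ε−2} → 𝐇_{n−1}, forming a long exact sequence ⋯ → 𝐇_n →E ℋ_{n+ε} →S ℋ_{n+ε−2} →M 𝐇_{n−1} →E ⋯ (i.e. im E = ker S, im S = ker M, and im M = ker E at each spot). Assume that the operator Δ of 𝐇 equals M ∘ E. Then the operation {a,b}' := (−1)^{|a|} E(M(a)·M(b)), defined for homogeneous a, b ∈ ℋ and extended bilinearly, is a graded Lie bracket of degree 2−ε on ℋ: it maps ℋ_i × ℋ_j to ℋ_{i+j+2−ε}, satisfies the graded antisymmetry {a,b}' = −(−1)^{(|a|+ε)(|b|+ε)} {b,a}', and satisfies the graded Jacobi identity {a,{b,c}'}' = {{a,b}',c}' + (−1)^{(|a|+ε)(|b|+ε)} {b,{a,c}'}'. Moreover M is a morphism of graded Lie algebras up to sign: {M(a),M(b)} =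 (−1)^{1−ε} M({a,b}') for all homogeneous a, b ∈ ℋ, where {−,−} denotes the Batalin–Vilkovisky bracket of 𝐇. -/
/-- Signs with exponents of the same parity agree. -/
lemma sign_congr {F : Type} [Field F] {m n : ℤ} (k : ℤ) (h : m = n + 2 * k) :
    (-1 : F) ^ m = (-1 : F) ^ n := by
  subst h
  rw [zpow_add₀ (by simp), zpow_mul]
  simp

/-- Opposite signs when the exponents have different parity. -/
lemma sign_congr_neg {F : Type} [Field F] {m n : ℤ} (k : ℤ) (h : m = n + 1 + 2 * k) :
    (-1 : F) ^ m = -(-1 : F) ^ n := by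
  rw [sign_congr k h, zpow_add₀ (by simp)]
  simp

/-- Lemma on the definition of the string bracket.
Let `𝐇` be a non-unital Batalin–Vilkovisky algebra over a field `F` (formalized as an
ambient `F`-vector space `V` with grading `A : ℤ → Submodule F V`, a bilinear associative
graded-commutative product `mul` of degree `0`, and a degree `+1` operator `Δ` with
`Δ ∘ Δ = 0` whose associated bracket `br` is a graded derivation in each variable), and
let `ℋ` be a graded vector space (ambient space `W` with grading `B : ℤ → Submodule F W`)
with linear maps `E : 𝐇_n → ℋ_{n+ε}`, `S : ℋ_{n+ε} → ℋ_{n+ε-2}`, `M : ℋ_{n+ε-2} → 𝐇_{n-1}`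
forming a long exact sequence, and such that `Δ = M ∘ E`.  Then the bracket
`{a,b}' := (-1)^{|a|} E (M a · M b)` is a graded Lie bracket of degree `2 - ε` on `ℋ`
(it maps `ℋ_i × ℋ_j` to `ℋ_{i+j+2-ε}`, is graded antisymmetric and satisfies the graded
Jacobi identity for the degrees shifted by `ε`), and `M` is a morphism of graded Lie
algebras up to the sign `(-1)^{1-ε}`. -/
theorem stmt2
    (F : Type) [Field F] (ε : ℤ)
    (V : Type) [AddCommGroup V] [Module F V] (A : ℤ → Submodule F V)
    (mul : V →ₗ[F] V →ₗ[F] V) (Δ : V →ₗ[F] V)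
    (W : Type) [AddCommGroup W] [Module F W] (B : ℤ → Submodule F W)
    (E : V →ₗ[F] W) (S : W →ₗ[F] W) (M : W →ₗ[F] V)
    -- the product is of degree 0, associative and graded commutative
    (hmul_deg : ∀ (i j : ℤ), ∀ x ∈ A i, ∀ y ∈ A j, mul x y ∈ A (i + j))
    (hmul_assoc : ∀ x y z : V, mul (mul x y) z = mul x (mul y z))
    (hmul_comm : ∀ (i j : ℤ), ∀ x ∈ A i, ∀ y ∈ A j,
      mul x y = ((-1 : F) ^ (i * j)) • mul y x)
    -- Δ is of degree +1 and squares to zero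
    (hΔ_deg : ∀ (i : ℤ), ∀ x ∈ A i, Δ x ∈ A (i + 1))
    (hΔΔ : ∀ x : V, Δ (Δ x) = 0)
    -- the Batalin–Vilkovisky bracket `br i x y` (for `x` homogeneous of degree `i`)
    -- and the hypothesis that it is a graded derivation in each variable
    (br : ℤ → V → V → V)
    (hbr : ∀ (i : ℤ) (x y : V), br i x y =
      ((-1 : F) ^ i) • Δ (mul x y) - ((-1 : F) ^ i) • mul (Δ x) y - mul x (Δ y))
    (hbr_der : ∀ (i j k : ℤ), ∀ x ∈ A i, ∀ y ∈ A j, ∀ z ∈ A k,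
      br i x (mul y z) =
        mul (br i x y) z + ((-1 : F) ^ (j * (i + 1))) • mul y (br i x z))
    -- degrees of E, S and M
    (hE_deg : ∀ (n : ℤ), ∀ x ∈ A n, E x ∈ B (n + ε))
    (hS_deg : ∀ (m : ℤ), ∀ a ∈ B m, S a ∈ B (m - 2))
    (hM_deg : ∀ (m : ℤ), ∀ a ∈ B m, M a ∈ A (m - ε + 1))
    -- exactness of the long exact sequence ⋯ → 𝐇 →E ℋ →S ℋ →M 𝐇 → ⋯
    (hexact₁ : LinearMap.range E = LinearMap.ker S)
    (hexact₂ : LinearMap.range S = LinearMap.ker M)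
    (hexact₃ : LinearMap.range M = LinearMap.ker E)
    -- the operator Δ equals M ∘ E
    (hΔME : ∀ x : V, M (E x) = Δ x)
    -- the bracket on ℋ : {a,b}' := (-1)^{|a|} E (M a · M b)
    (br' : ℤ → W → W → W)
    (hbr' : ∀ (i : ℤ) (a b : W), br' i a b = ((-1 : F) ^ i) • E (mul (M a) (M b))) :
    -- {−,−}' is of degree 2 - ε
    (∀ (i j : ℤ), ∀ a ∈ B i, ∀ b ∈ B j, br' i a b ∈ B (i + j + 2 - ε)) ∧
    -- graded antisymmetry
    (∀ (i j : ℤ), ∀ a ∈ B i, ∀ b ∈ B j,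
      br' i a b = -(((-1 : F) ^ ((i + ε) * (j + ε))) • br' j b a)) ∧
    -- graded Jacobi identity
    (∀ (i j k : ℤ), ∀ a ∈ B i, ∀ b ∈ B j, ∀ c ∈ B k,
      br' i a (br' j b c) =
        br' (i + j + 2 - ε) (br' i a b) c +
          ((-1 : F) ^ ((i + ε) * (j + ε))) • br' j b (br' i a c)) ∧
    -- M is a morphism of graded Lie algebras up to the sign (-1)^{1-ε}
    (∀ (i j : ℤ), ∀ a ∈ B i, ∀ b ∈ B j,
      br (i - ε + 1) (M a) (M b) = ((-1 : F) ^ (1 - ε)) • M (br' i a b)) := by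
  have hn : (-1 : F) ≠ 0 := by simp
  have hEM : ∀ a, E (M a) = 0 := fun a => by
    have h : M a ∈ LinearMap.ker E := hexact₃ ▸ LinearMap.mem_range_self M a
    exact h
  have hΔM : ∀ a, Δ (M a) = 0 := fun a => by rw [← hΔME, hEM, map_zero]
  have hEΔ : ∀ x, E (Δ x) = 0 := fun x => by rw [← hΔME, hEM]
  have hbrM : ∀ (p : ℤ) (a b : W),
      br p (M a) (M b) = ((-1 : F) ^ p) • Δ (mul (M a) (M b)) := fun p a b => by
    rw [hbr, hΔM, hΔM]; simp
  refine ⟨?_, ?_, ?_, ?_⟩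
  · intro i j a ha b hb
    rw [hbr']
    apply Submodule.smul_mem
    have h := hE_deg _ _ (hmul_deg _ _ _ (hM_deg _ _ ha) _ (hM_deg _ _ hb))
    have e : i - ε + 1 + (j - ε + 1) + ε = i + j + 2 - ε := by ring
    rwa [e] at h
  · intro i j a ha b hb
    rw [hbr', hbr', hmul_comm _ _ _ (hM_deg _ _ ha) _ (hM_deg _ _ hb), map_smul, smul_smul,
      smul_smul, ← neg_smul, ← zpow_add₀ hn, ← zpow_add₀ hn]
    congr 1
    apply sign_congr_neg (i - i * ε - j * ε - ε)
    ring
  · intro i j k a ha b hb c hc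
    have hx := hM_deg _ _ ha
    have hy := hM_deg _ _ hb
    have hz := hM_deg _ _ hc
    have key := congrArg E (hbr_der _ _ _ _ hx _ hy _ hz)
    rw [hbrM, hbrM, hbr, hΔM] at key
    simp only [map_zero, LinearMap.zero_apply, smul_zero, sub_zero, map_sub, map_add, map_smul,
      LinearMap.smul_apply, hEΔ, zero_sub, smul_smul] at key
    have key2 := neg_eq_iff_eq_neg.mp key
    simp only [hbr', map_smul, LinearMap.smul_apply, hΔME, smul_smul]
    rw [key2, smul_neg, smul_add, neg_add, smul_smul, smul_smul, ← neg_smul, ← neg_smul]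
    simp only [← zpow_add₀ hn]
    congr 2
    · rw [neg_eq_iff_eq_neg]
      apply sign_congr_neg (-1)
      ring
    · rw [neg_eq_iff_eq_neg]
      apply sign_congr_neg (1 + i - i * ε + j - j * ε - 2 * ε)
      ring
  · intro i j a ha b hb
    rw [hbrM, hbr', map_smul, hΔME, smul_smul, ← zpow_add₀ hn]
    congr 2
    ring
end

section
/- Let H be a finite-dimensional Hopf algebra over a field F with antipode S. Then H is a symmetric Frobenius algebra (i.e. admits a symmetric Frobenius form) if and only if H is unimodular and S² = S ∘ S is an inner automorphism of H, i.e. there exists an invertible element u ∈ H such that S(S(h)) = u·h·u⁻¹ for all h ∈ H. -/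
namespace OS
open Coalgebra HopfAlgebra TensorProduct WithConv

variable {F : Type} [Field F] {H : Type} [Ring H] [HopfAlgebra F H]

/-- inclusion into the left factor -/
noncomputable abbrev iL : H →ₐ[F] H ⊗[F] H := Algebra.TensorProduct.includeLeft
/-- inclusion into the right factor -/
noncomputable abbrev iR : H →ₐ[F] H ⊗[F] H := Algebra.TensorProduct.includeRight

lemma alg_inv1 (i : H →ₐ[F] H ⊗[F] H) :
    toConv i.toLinearMap * toConv (i.toLinearMap ∘ₗ antipode F) = 1 := by
  have h := LinearMap.algHom_comp_convMul_distrib i (toConv (LinearMap.id (R := F) (M := H)))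
    (toConv (antipode F))
  rw [LinearMap.id_mul_antipode] at h
  have h2 := congrArg toConv h
  simp only [toConv_ofConv] at h2
  refine Eq.trans ?_ (h2.symm.trans ?_)
  · rfl
  · ext x; simp

lemma alg_inv2 (i : H →ₐ[F] H ⊗[F] H) :
    toConv (i.toLinearMap ∘ₗ antipode F) * toConv i.toLinearMap = 1 := by
  have h := LinearMap.algHom_comp_convMul_distrib i 
    (toConv (antipode F)) (toConv (LinearMap.id (R := F) (M := H)))
  rw [LinearMap.antipode_mul_id] at h
  have h2 := congrArg toConv h
  simp only [toConv_ofConv] at h2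
  refine Eq.trans ?_ (h2.symm.trans ?_)
  · rfl
  · ext x; simp

lemma comul_eq : toConv (comul (R := F) (A := H)) =
    toConv (iL (F := F) (H := H)).toLinearMap * toConv iR.toLinearMap := by
  ext x
  rw [(ℛ F x).convMul_apply]
  simp [(ℛ F x).eq]

lemma comul_antipode : toConv (comul (R := F) (A := H) ∘ₗ antipode F) =
    toConv ((iR (F := F) (H := H)).toLinearMap ∘ₗ antipode F) *
      toConv (iL.toLinearMap ∘ₗ antipode F) := by
  have h1 := alg_inv1 (Bialgebra.comulAlgHom F H)
  have h2 : (toConv ((iR (F := F) (H := H)).toLinearMap ∘ₗ antipode F) *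
      toConv (iL.toLinearMap ∘ₗ antipode F)) * toConv (comul (R := F) (A := H)) = 1 := by
    rw [comul_eq, mul_assoc, ← mul_assoc (toConv (iL.toLinearMap ∘ₗ _)), alg_inv2, one_mul, alg_inv2]
  exact (left_inv_eq_right_inv h2 h1).symm

/-- representation of `Δ (S h)` -/
noncomputable def reprS {h : H} {ι : Type*} (r : Repr F h ι) : Repr F (antipode F h) ι where
  index := r.index
  left i := antipode F (r.right i)
  right i := antipode F (r.left i)
  eq := by
    have h1 : comul (R := F) (antipode F h) = _ := congrArg (fun f => f.ofConv h) (comul_antipode (F := F) (H := H))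
    rw [h1, r.convMul_apply]
    simp

/-- `Δ(S h₁)(h₂ ⊗ 1) = 1 ⊗ S h` -/
lemma id1 {h : H} {ι : Type*} (r : Repr F h ι) :
    ∑ i ∈ r.index, comul (R := F) (antipode F (r.left i)) * (r.right i ⊗ₜ[F] (1 : H))
      = (1 : H) ⊗ₜ antipode F h := by
  have h1 : toConv (comul (R := F) (A := H) ∘ₗ antipode F) * toConv iL.toLinearMap
     = toConv (iR.toLinearMap ∘ₗ antipode F) := by
    rw [comul_antipode, mul_assoc, alg_inv2, mul_one]
  have h2 := congrArg (fun f => f.ofConv h) h1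
  simpa [r.convMul_apply] using h2

/-- `(S h₁ ⊗ 1)Δ(h₂) = 1 ⊗ h` -/
lemma id2 {h : H} {ι : Type*} (r : Repr F h ι) :
    ∑ i ∈ r.index, (antipode F (r.left i) ⊗ₜ[F] (1 : H)) * comul (R := F) (r.right i) 
      = (1 : H) ⊗ₜ h := by
  have h1 : toConv (iL.toLinearMap ∘ₗ antipode F) * toConv (comul (R := F) (A := H))
     = toConv (iR.toLinearMap) := by
    rw [comul_eq, ← mul_assoc, alg_inv2, one_mul]
  have h2 := congrArg (fun f => f.ofConv h) h1
  simpa [r.convMul_apply] using h2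

/-- `Δ(h₁)(1 ⊗ S h₂) = h ⊗ 1` -/
lemma id3 {h : H} {ι : Type*} (r : Repr F h ι) :
    ∑ i ∈ r.index, comul (R := F) (r.left i) * ((1 : H) ⊗ₜ[F] antipode F (r.right i))
      = h ⊗ₜ (1 : H) := by
  have h1 : toConv (comul (R := F) (A := H)) * toConv (iR.toLinearMap ∘ₗ antipode F)
     = toConv (iL.toLinearMap) := by
    rw [comul_eq, mul_assoc, alg_inv1, mul_one]
  have h2 := congrArg (fun f => f.ofConv h) h1
  simpa [r.convMul_apply] using h2

/-- pairing with a tensor of functionals -/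
noncomputable def E (g f : H →ₗ[F] F) : H ⊗[F] H →ₗ[F] F := dualDistrib F H H (g ⊗ₜ f)

@[simp] lemma E_tmul (g f : H →ₗ[F] F) (a b : H) : E g f (a ⊗ₜ b) = g a * f b := by
  simp [E]

/-- convolution, bilinear -/
noncomputable def cvL : (H →ₗ[F] F) →ₗ[F] (H →ₗ[F] F) →ₗ[F] (H →ₗ[F] F) :=
  (TensorProduct.mk F _ _).compr₂ (LinearMap.lcomp F F comul ∘ₗ dualDistrib F H H)

/-- convolution -/
noncomputable def cv (g f : H →ₗ[F] F) : H →ₗ[F] F := E g f ∘ₗ comul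

lemma cvL_apply (g f : H →ₗ[F] F) : cvL g f = cv g f := rfl

lemma cv_apply (g f : H →ₗ[F] F) (x : H) : cv g f x = E g f (comul x) := rfl

lemma cv_repr (g f : H →ₗ[F] F) {x : H} {ι : Type*} (r : Repr F x ι) :
    cv g f x = ∑ i ∈ r.index, g (r.left i) * f (r.right i) := by
  rw [cv_apply, ← r.eq]; simp

lemma cv_conv (g f : H →ₗ[F] F) : cv g f = (toConv g * toConv f).ofConv := by
  ext x
  rw [cv_repr g f (ℛ F x)]
  exact ((ℛ F x).convMul_apply (toConv g) (toConv f)).symm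

lemma cv_assoc (g f k : H →ₗ[F] F) : cv (cv g f) k = cv g (cv f k) := by
  simp only [cv_conv, toConv_ofConv, mul_assoc]

lemma counit_cv (f : H →ₗ[F] F) : cv counit f = f := by
  rw [cv_conv]
  exact congrArg ofConv (one_mul (toConv f))

lemma E_mulRight (g f : H →ₗ[F] F) (a b : H) (t : H ⊗[F] H) :
    E (g ∘ₗ LinearMap.mulRight F a) (f ∘ₗ LinearMap.mulRight F b) t = E g f (t * (a ⊗ₜ b)) := by
  induction t with
  | zero => simp
  | tmul x y => simp
  | add x y hx hy => simp [add_mul, hx, hy]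

lemma step1 (g f : H →ₗ[F] F) (x : H) {h : H} {ι : Type*} (r : Repr F h ι) :
    cv g (f ∘ₗ LinearMap.mulRight F (antipode F h)) x =
      ∑ i ∈ r.index, cv (g ∘ₗ LinearMap.mulRight F (r.right i)) f (x * antipode F (r.left i)) := by
  have e1 := E_mulRight g f 1 (antipode F h) (comul x)
  have e2 := fun a t => E_mulRight g f a 1 t
  simp only [LinearMap.mulRight_one, LinearMap.comp_id] at e1 e2
  simp only [cv_apply, e1, e2, Bialgebra.comul_mul, ← map_sum, mul_assoc, ← Finset.mul_sum, id1]

section fin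
variable {n : Type} [Fintype n] (b : Module.Basis n F H)

lemma comul_expand (x : H) : comul (R := F) x = 
    ∑ i, ∑ j, cv (b.coord i) (b.coord j) x • (b i ⊗ₜ[F] b j) := by
  have : ∀ t : H ⊗[F] H, t = ∑ i, ∑ j, E (b.coord i) (b.coord j) t • (b i ⊗ₜ[F] b j) := by
    intro t
    induction t with
    | zero => simp
    | tmul x y =>
      have e : x ⊗ₜ[F] y = (∑ i, b.repr x i • b i) ⊗ₜ[F] (∑ i, b.repr y i • b i) := by
        rw [b.sum_repr, b.sum_repr]
      refine e.trans ?_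
      rw [TensorProduct.sum_tmul]
      refine Finset.sum_congr rfl fun i _ => ?_
      rw [TensorProduct.tmul_sum]
      refine Finset.sum_congr rfl fun j _ => ?_
      rw [TensorProduct.smul_tmul_smul, E_tmul, Module.Basis.coord_apply, Module.Basis.coord_apply]
    | add x y hx hy =>
      conv_lhs => rw [hx, hy]
      simp [add_smul, Finset.sum_add_distrib]
  exact this _

lemma dual_expand (f : H →ₗ[F] F) : f = ∑ k, f (b k) • b.coord k := by
  ext x
  conv_lhs => rw [← b.sum_repr x]
  simp

lemma basis_trick (L : (H →ₗ[F] F) →ₗ[F] (H ⊗[F] H) →ₗ[F] F) :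
    ∑ k, L (b.coord k) (comul (b k)) =
      ∑ i, ∑ j, L (cv (b.coord i) (b.coord j)) (b i ⊗ₜ b j) := by
  have h1 : ∀ i j, L (cv (b.coord i) (b.coord j)) (b i ⊗ₜ b j)
      = ∑ k, cv (b.coord i) (b.coord j) (b k) * L (b.coord k) (b i ⊗ₜ b j) := by
    intro i j
    have := congrArg (fun q => L q (b i ⊗ₜ b j)) (dual_expand b (cv (b.coord i) (b.coord j)))
    simpa only [map_sum, LinearMap.sum_apply, map_smul, LinearMap.smul_apply, smul_eq_mul]
      using this
  simp_rw [h1]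
  have h2 : ∀ k, L (b.coord k) (comul (b k)) =
     ∑ i, ∑ j, cv (b.coord i) (b.coord j) (b k) * L (b.coord k) (b i ⊗ₜ b j) := by
    intro k
    conv_lhs => rw [comul_expand b (b k)]
    simp
  simp_rw [h2]
  rw [Finset.sum_comm]
  refine Finset.sum_congr rfl fun i _ => ?_
  rw [Finset.sum_comm]

/-- projection onto integrals -/
noncomputable def P (f : H →ₗ[F] F) : H →ₗ[F] F :=
  ∑ k, cv (b.coord k) f ∘ₗ LinearMap.mulRight F (antipode F (antipode F (b k)))

lemma P_apply (f : H →ₗ[F] F) (x : H) :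
    P b f x = ∑ k, cv (b.coord k) f (x * antipode F (antipode F (b k))) := by
  simp [P]

lemma P_recon (f : H →ₗ[F] F) (x : H) :
    ∑ i, P b (cv (b.coord i) f) (x * antipode F (b i)) = f x := by
  have := basis_trick b (LinearMap.lcomp F F (LinearMap.mulLeft F x ∘ₗ antipode F ∘ₗ
    LinearMap.mul' F H ∘ₗ TensorProduct.map (antipode F) LinearMap.id) ∘ₗ cvL.flip f)
  simp only [LinearMap.comp_apply, LinearMap.flip_apply, cvL_apply, LinearMap.lcomp_apply,
    TensorProduct.map_tmul, LinearMap.mul'_apply, LinearMap.mulLeft_apply, LinearMap.id_apply,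
    cv_assoc, antipode_mul_antidistrib] at this
  simp only [P_apply, mul_assoc]
  rw [Finset.sum_comm, ← this]
  have h2 : ∀ k, LinearMap.mul' F H (TensorProduct.map (antipode F) LinearMap.id (comul (b k)))
      = algebraMap F H (counit (b k)) := fun k => mul_antipode_rTensor_comul_apply (b k)
  simp only [h2, Algebra.algebraMap_eq_smul_one, map_smul, antipode_one, mul_smul_comm, mul_one]
  have h3 := congrArg (fun q => cvL q f x) (dual_expand b (counit (R := F) (A := H)))
  simp only [map_sum, LinearMap.sum_apply, map_smul, LinearMap.smul_apply, cvL_apply,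
    counit_cv] at h3
  exact h3.symm

lemma sum_coord (g : H →ₗ[F] F) :
    ∑ i, cv (g ∘ₗ LinearMap.mulRight F (antipode F (b i))) (b.coord i) = g 1 • counit := by
  ext x
  have := congrArg g (sum_mul_antipode_eq_smul (ℛ F x))
  simp only [LinearMap.sum_apply, cv_repr _ _ (ℛ F x)]
  rw [Finset.sum_comm]
  simp only [map_sum, map_smul] at this
  simp only [LinearMap.smul_apply, smul_eq_mul, mul_comm (g 1)]
  rw [← smul_eq_mul, ← this]
  refine Finset.sum_congr rfl fun i _ => ?_
  have h3 := congrArg (fun q => g ((ℛ F x).left i * antipode F q))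
    (b.sum_repr ((ℛ F x).right i))
  simp only [map_sum, Finset.mul_sum, map_smul, mul_smul_comm] at h3
  simpa [mul_comm] using h3

lemma P_int (f g : H →ₗ[F] F) : cv g (P b f) = g 1 • P b f := by
  ext x
  have := basis_trick b (LinearMap.lcomp F F (LinearMap.mul' F (H ⊗[F] H) ∘ₗ
    TensorProduct.map (comul ∘ₗ LinearMap.mulLeft F x ∘ₗ antipode F ∘ₗ antipode F)
      (iL.toLinearMap ∘ₗ antipode F) ∘ₗ (TensorProduct.comm F H H).toLinearMap) ∘ₗ
      dualDistrib F H H ∘ₗ TensorProduct.mk F _ _ g ∘ₗ cvL.flip f)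
  have e2 := fun f a t => E_mulRight g f a 1 t
  simp only [LinearMap.mulRight_one, LinearMap.comp_id] at e2
  have key : ∀ (q : H →ₗ[F] F) (a c : H), (LinearMap.lcomp F F (LinearMap.mul' F (H ⊗[F] H) ∘ₗ
    TensorProduct.map (comul ∘ₗ LinearMap.mulLeft F x ∘ₗ antipode F ∘ₗ antipode F)
      (iL.toLinearMap ∘ₗ antipode F) ∘ₗ (TensorProduct.comm F H H).toLinearMap) ∘ₗ
      dualDistrib F H H ∘ₗ TensorProduct.mk F _ _ g ∘ₗ cvL.flip f) q (a ⊗ₜ c) =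
      cv (g ∘ₗ LinearMap.mulRight F (antipode F a)) (cv q f)
        (x * antipode F (antipode F c)) := by
    intro q a c
    rw [cv_apply, e2]
    rfl
  have l1 : cv g (P b f) x = ∑ k, cv g (cv (b.coord k) f ∘ₗ
      LinearMap.mulRight F (antipode F (antipode F (b k)))) x := by
    rw [P, ← cvL_apply, map_sum, LinearMap.sum_apply]; rfl
  rw [l1]
  have l2 := fun k => step1 g (cv (b.coord k) f) x (reprS (ℛ F (b k)))
  simp only [l2]
  simp only [← (ℛ F (b _)).eq, map_sum] at this
  simp only [key] at this
  refine Eq.trans this ?_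
  rw [Finset.sum_comm]
  simp only [cv_assoc, LinearMap.smul_apply, P_apply, Finset.smul_sum]
  refine Finset.sum_congr rfl fun j _ => ?_
  simp only [← cv_assoc _ (b.coord _) (cv _ _)]
  rw [← LinearMap.sum_apply]
  have := congrArg (fun q => cvL q (cv (b.coord j) f)) (sum_coord b g)
  simp only [map_sum, LinearMap.sum_apply, map_smul, LinearMap.smul_apply, cvL_apply,
    counit_cv] at this
  rw [this]; rfl

end fin

lemma exists_int (F H : Type) [Field F] [Ring H] [HopfAlgebra F H] [FiniteDimensional F H] :
    ∃ l : H →ₗ[F] F, l ≠ 0 ∧ ∀ g, cv g l = g 1 • l := by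
  by_contra hcon
  have h0 : ∀ f, P (Module.finBasis F H) f = 0 := by
    intro f
    by_contra hf
    exact hcon ⟨_, hf, P_int _ f⟩
  have := P_recon (Module.finBasis F H) counit 1
  simp [h0] at this

lemma inj [FiniteDimensional F H] {l : H →ₗ[F] F} (l0 : l ≠ 0) (hl : ∀ g, cv g l = g 1 • l)
    {h : H} (hh : ∀ x, l (x * antipode F h) = 0) : h = 0 := by
  have hG : ∀ (x : H) (G : H →ₗ[F] F),
      cv (l ∘ₗ LinearMap.mulLeft F x ∘ₗ antipode F) G h = 0 := by
    intro x G
    have h1 := step1 G l x (ℛ F h)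
    have h2 : l ∘ₗ LinearMap.mulRight F (antipode F h) = 0 := by
      ext y; simpa using hh y
    rw [h2, ← cvL_apply, map_zero, LinearMap.zero_apply] at h1
    rw [cv_repr _ _ (ℛ F h), h1]
    refine Finset.sum_congr rfl fun i _ => ?_
    simp [hl, mul_comm]
  obtain ⟨x, hx⟩ : ∃ x, l x ≠ 0 := by
    by_contra hc
    push Not at hc
    exact l0 (LinearMap.ext hc)
  rw [← Module.forall_dual_apply_eq_zero_iff F]
  intro g'
  let b := Module.finBasis F H
  have h1 := congrArg (fun q => cvL q g' h)
    (sum_coord b (l ∘ₗ LinearMap.mulLeft F x ∘ₗ antipode F))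
  have h2 : ∀ i, (l ∘ₗ LinearMap.mulLeft F x ∘ₗ antipode F) ∘ₗ
      LinearMap.mulRight F (antipode F (b i)) =
      l ∘ₗ LinearMap.mulLeft F (x * antipode F (antipode F (b i))) ∘ₗ antipode F := by
    intro i; ext y; simp [antipode_mul_antidistrib]
  simp only [h2, map_sum, LinearMap.sum_apply, map_smul, LinearMap.smul_apply, cvL_apply,
    counit_cv, cv_assoc, hG] at h1
  simpa [hx] using h1

section frob
variable [FiniteDimensional F H] {t : H →ₗ[F] F}

lemma surjR (ht : ∀ w, (∀ x, t (x * w) = 0) → w = 0) (f : H →ₗ[F] F) :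
    ∃ w, ∀ z, f z = t (z * w) := by
  have hi : Function.Injective ((LinearMap.mul F H).compr₂ t).flip := by
    rw [injective_iff_map_eq_zero]
    intro w hw
    exact ht w fun x => by simpa using LinearMap.congr_fun hw x
  obtain ⟨w, hw⟩ := (LinearMap.injective_iff_surjective_of_finrank_eq_finrank
    (Subspace.dual_finrank_eq (K := F) (V := H)).symm).1 hi f
  exact ⟨w, fun z => by rw [← hw]; simp⟩

lemma ndL (ht : ∀ w, (∀ x, t (x * w) = 0) → w = 0) (w : H) (hw : ∀ x, t (w * x) = 0) :
    w = 0 := by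
  rw [← Module.forall_dual_apply_eq_zero_iff F]
  intro f
  obtain ⟨v, hv⟩ := surjR ht f
  rw [hv, hw]

lemma surjL (ht : ∀ w, (∀ x, t (x * w) = 0) → w = 0) (f : H →ₗ[F] F) :
    ∃ w, ∀ z, f z = t (w * z) := by
  have hi : Function.Injective ((LinearMap.mul F H).compr₂ t) := by
    rw [injective_iff_map_eq_zero]
    intro w hw
    exact ndL ht w fun x => by simpa using LinearMap.congr_fun hw x
  obtain ⟨w, hw⟩ := (LinearMap.injective_iff_surjective_of_finrank_eq_finrank
    (Subspace.dual_finrank_eq (K := F) (V := H)).symm).1 hi f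
  exact ⟨w, fun z => by rw [← hw]; simp⟩

end frob

/-- contraction of the second factor -/
noncomputable def A (f : H →ₗ[F] F) : H ⊗[F] H →ₗ[F] H :=
  (TensorProduct.rid F H).toLinearMap ∘ₗ LinearMap.lTensor H f

@[simp] lemma A_tmul (f : H →ₗ[F] F) (a c : H) : A f (a ⊗ₜ c) = f c • a := by
  simp [A]

lemma A_mul (f : H →ₗ[F] F) (a c d e : H) (t : H ⊗[F] H) :
    A f ((a ⊗ₜ c) * t * (d ⊗ₜ e)) =
      a * A (f ∘ₗ LinearMap.mulLeft F c ∘ₗ LinearMap.mulRight F e) t * d := by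
  induction t with
  | zero => simp
  | tmul x y => simp [mul_assoc]
  | add x y hx hy => simp [add_mul, mul_add, hx, hy]

lemma A_int {l : H →ₗ[F] F} (hl : ∀ g, cv g l = g 1 • l) (x : H) :
    A l (comul x) = l x • 1 := by
  rw [← sub_eq_zero, ← Module.forall_dual_apply_eq_zero_iff F]
  intro g
  have h1 : ∀ t, g (A l t) = E g l t := by
    intro t
    induction t with
    | zero => simp
    | tmul x y => simp [mul_comm]
    | add x y hx hy => simp [hx, hy]
  have := LinearMap.congr_fun (hl g) x
  rw [cv_apply] at this
  simp [h1, this, mul_comm]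

lemma sum_smul_counit {h : H} {ι : Type*} (r : Repr F h ι) :
    ∑ i ∈ r.index, counit (R := F) (r.right i) • r.left i = h := by
  have := congrArg (TensorProduct.rid F H) (sum_tmul_counit_eq r)
  simpa only [map_sum, TensorProduct.rid_tmul, one_smul] using this

lemma left_int {L : H} (hL : ∀ h : H, h * L = counit (R := F) h • L) (h : H) :
    ((1 : H) ⊗ₜ[F] h) * comul L = (antipode F h ⊗ₜ (1 : H)) * comul L := by
  rw [← id2 (ℛ F h), Finset.sum_mul]
  conv_rhs => rw [← sum_smul_counit (ℛ F h)]
  simp only [mul_assoc, ← Bialgebra.comul_mul, hL, map_sum, TensorProduct.sum_tmul,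
    Finset.sum_mul, map_smul, mul_smul_comm, ← TensorProduct.smul_tmul', smul_mul_assoc]

lemma right_int {L : H} (hL : ∀ h : H, L * h = counit (R := F) h • L) (h : H) :
    comul L * (h ⊗ₜ[F] (1 : H)) = comul L * ((1 : H) ⊗ₜ antipode F h) := by
  rw [← id3 (ℛ F h), Finset.mul_sum]
  conv_rhs => rw [← sum_counit_smul (ℛ F h)]
  simp only [← mul_assoc, ← Bialgebra.comul_mul, hL, map_sum, TensorProduct.tmul_sum,
    Finset.mul_sum, map_smul, mul_smul_comm, TensorProduct.tmul_smul, smul_mul_assoc]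

lemma S_bij [FiniteDimensional F H] {l : H →ₗ[F] F} (l0 : l ≠ 0)
    (hl : ∀ g, cv g l = g 1 • l) : Function.Injective (antipode F (A := H)) := by
  rw [injective_iff_map_eq_zero]
  intro h hh
  exact inj l0 hl (h := h) fun x => by simp [hh]

lemma int_nd [FiniteDimensional F H] {l : H →ₗ[F] F} (l0 : l ≠ 0)
    (hl : ∀ g, cv g l = g 1 • l) (w : H) (hw : ∀ x, l (x * w) = 0) : w = 0 := by
  obtain ⟨h, rfl⟩ := LinearMap.injective_iff_surjective.1 (S_bij l0 hl) w
  rw [inj l0 hl hw, map_zero]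

lemma key [FiniteDimensional F H] {l : H →ₗ[F] F} (l0 : l ≠ 0)
    (hl : ∀ g, cv g l = g 1 • l) {L : H} (L0 : L ≠ 0)
    (hL : ∀ h : H, h * L = counit (R := F) h • L)
    (hR : ∀ h : H, L * h = counit (R := F) h • L) (y z : H) :
    l (y * z) = l (z * antipode F (antipode F y)) := by
  have hc : l L ≠ 0 := by
    intro hc
    refine L0 (int_nd l0 hl L fun x => ?_)
    rw [hL, map_smul, hc, smul_zero]
  have h1 : ∀ w, A (l ∘ₗ LinearMap.mulLeft F w) (comul L) = l L • antipode F w := by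
    intro w
    have e1 := A_mul l 1 w 1 1 (comul L)
    have e2 := A_mul l (antipode F w) 1 1 1 (comul L)
    rw [left_int hL, e2] at e1
    simpa [A_int hl] using e1.symm
  have h2 : A (l ∘ₗ LinearMap.mulRight F (antipode F (antipode F y))) (comul L) =
      l L • antipode F y := by
    have e1 := A_mul l 1 1 1 (antipode F (antipode F y)) (comul L)
    have e2 := A_mul l 1 1 (antipode F y) 1 (comul L)
    rw [mul_assoc, ← right_int hR, ← mul_assoc, e2] at e1
    simpa [A_int hl] using e1.symm
  obtain ⟨w, hw⟩ := surjL (int_nd l0 hl) (l ∘ₗ LinearMap.mulRight F (antipode F (antipode F y)))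
  have h3 : l ∘ₗ LinearMap.mulRight F (antipode F (antipode F y)) = l ∘ₗ LinearMap.mulLeft F w :=
    LinearMap.ext hw
  rw [h3, h1] at h2
  have h4 : w = y := S_bij l0 hl (smul_right_injective H hc h2)
  have := hw z
  rw [h4] at this
  simpa using this.symm

end OS



/-- Oberst–Schneider. A finite-dimensional Hopf algebra `H` over a field
`F` is a symmetric Frobenius algebra (i.e. admits a nondegenerate symmetric bilinear form
`β` with `β (x*y) z = β x (y*z)`) if and only if `H` is unimodular (there is a nonzero
element which is both a left and a right integral in `H`) and the square of the antipode
is an inner automorphism of `H`. -/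
theorem stmt3
    (F : Type) [Field F] (H : Type) [Ring H] [HopfAlgebra F H] [FiniteDimensional F H] :
    (∃ β : H →ₗ[F] H →ₗ[F] F,
        (∀ x, (∀ y, β x y = 0) → x = 0) ∧
        (∀ y, (∀ x, β x y = 0) → y = 0) ∧
        (∀ x y z, β (x * y) z = β x (y * z)) ∧
        (∀ x y, β x y = β y x)) ↔
      ((∃ l : H, l ≠ 0 ∧ (∀ h : H, h * l = Coalgebra.counit (R := F) h • l) ∧
          (∀ h : H, l * h = Coalgebra.counit (R := F) h • l)) ∧
        (∃ u : Hˣ, ∀ h : H,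
          HopfAlgebra.antipode (R := F) (HopfAlgebra.antipode (R := F) h)
            = ↑u * h * ↑u⁻¹)) := by
  obtain ⟨l, l0, hl⟩ := OS.exists_int F H
  have lnd := OS.int_nd l0 hl
  constructor
  · rintro ⟨β, hβ1, hβ2, hβ3, hβ4⟩
    have hb : ∀ x y, β x y = β 1 (x * y) := fun x y => by rw [← hβ3, one_mul]
    set t : H →ₗ[F] F := β 1 with ht
    have tsym : ∀ x y, t (x * y) = t (y * x) := fun x y => by rw [← hb, ← hb, hβ4]
    have tnd : ∀ w, (∀ x, t (x * w) = 0) → w = 0 := fun w hw =>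
      hβ2 w fun x => by rw [hb, hw]
    have tndL := OS.ndL tnd
    obtain ⟨L, hL⟩ := OS.surjL tnd (Coalgebra.counit (R := F) (A := H))
    have hr : ∀ h : H, L * h = Coalgebra.counit (R := F) h • L := by
      intro h
      rw [← sub_eq_zero]
      refine tndL _ fun x => ?_
      rw [sub_mul, map_sub, mul_assoc, ← hL, smul_mul_assoc, map_smul, ← hL,
        Bialgebra.counit_mul, smul_eq_mul, sub_self]
    have hl' : ∀ h : H, h * L = Coalgebra.counit (R := F) h • L := by
      intro h
      rw [← sub_eq_zero]
      refine tnd _ fun x => ?_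
      rw [mul_sub, map_sub, ← mul_assoc, tsym, ← hL, mul_smul_comm, map_smul, tsym, ← hL,
        Bialgebra.counit_mul, smul_eq_mul, mul_comm, sub_self]
    have L0 : L ≠ 0 := by
      rintro rfl
      have := hL 1
      simp at this
    refine ⟨⟨L, L0, hl', hr⟩, ?_⟩
    obtain ⟨u, hu⟩ := OS.surjL tnd l
    obtain ⟨v, hv⟩ := OS.surjL lnd t
    have huv : u * v = 1 := by
      rw [← sub_eq_zero]
      refine tndL _ fun x => ?_
      rw [sub_mul, map_sub, mul_assoc, ← hu, ← hv, one_mul, sub_self]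
    have hvu : v * u = 1 := by
      rw [← sub_eq_zero]
      refine OS.ndL lnd _ fun x => ?_
      rw [sub_mul, map_sub, mul_assoc, ← hv, ← hu, one_mul, sub_self]
    refine ⟨⟨u, v, huv, hvu⟩, fun y => ?_⟩
    have h1 : u * y = HopfAlgebra.antipode F (HopfAlgebra.antipode F y) * u := by
      rw [← sub_eq_zero]
      refine tndL _ fun z => ?_
      have := OS.key l0 hl L0 hl' hr y z
      rw [hu, hu] at this
      rw [sub_mul, map_sub, mul_assoc, this, ← mul_assoc, tsym, mul_assoc, sub_self]
    change _ = u * y * v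
    rw [h1, mul_assoc, huv, mul_one]
  · rintro ⟨⟨L, L0, hL, hR⟩, u, hu⟩
    have k := OS.key l0 hl L0 hL hR
    have hsym : ∀ x y : H, l (↑u⁻¹ * (x * y)) = l (↑u⁻¹ * (y * x)) := by
      intro x y
      have e1 : l (↑u⁻¹ * (x * y)) = l (y * x * ↑u⁻¹) := by
        rw [← mul_assoc, k, hu]
        simp [mul_assoc]
      have e2 : l (↑u⁻¹ * (y * x)) = l (y * x * ↑u⁻¹) := by
        rw [k, hu]
        simp [mul_assoc]
      rw [e1, e2]
    have hnd : ∀ y, (∀ x, l (↑u⁻¹ * (x * y)) = 0) → y = 0 := by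
      intro y hy
      refine lnd y fun x => ?_
      have := hy (u * x)
      simpa [mul_assoc] using this
    refine ⟨(LinearMap.mul F H).compr₂ (l ∘ₗ LinearMap.mulLeft F (↑u⁻¹ : H)), ?_, ?_, ?_, ?_⟩
    · intro x hx
      refine hnd x fun y => ?_
      rw [hsym]
      simpa using hx y
    · intro y hy
      exact hnd y fun x => by simpa using hy x
    · intro x y z
      simp [mul_assoc]
    · intro x y
      simpa using hsym x y
end

section
/- Let H be a finite-dimensional Hopf algebra over a field F. Then H is a Frobenius algebra: there exists a Frobenius form on H, i.e. a nondegenerate F-bilinear form β : H × H → F with β(x·y, z) = β(x, y·z) for all x, y, z ∈ H. Equivalently, there is an isomorphism of left H-modules from H to its linear dual H^∨ = Hom_F(H, F), where the left H-action on H^∨ is given by (h·f)(k) := f(k·h). -/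
namespace Frob

open scoped TensorProduct
open Coalgebra HopfAlgebra

variable {F : Type} [Field F] {H : Type} [Ring H] [HopfAlgebra F H]
  {D : Type} [AddCommGroup D] [Module F D]

/-- `z ⊗ f ↦ z₁ ⊗ α z₂ f` -/
noncomputable def tw (α : H →ₗ[F] D →ₗ[F] D) : H ⊗[F] D →ₗ[F] H ⊗[F] D :=
  (TensorProduct.lift α).lTensor H ∘ₗ (TensorProduct.assoc F H H D).toLinearMap ∘ₗ
    (comul (R := F) (A := H)).rTensor D

theorem tw_tmul (α : H →ₗ[F] D →ₗ[F] D) {z : H} {ι : Type*} (r : Repr F z ι) (f : D) :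
    tw α (z ⊗ₜ f) = ∑ i ∈ r.index, r.left i ⊗ₜ[F] α (r.right i) f := by
  simp [tw, ← r.eq, TensorProduct.sum_tmul, map_sum]

theorem tw_tw (α β : H →ₗ[F] D →ₗ[F] D)
    (h : ∀ z : H, TensorProduct.lift ((LinearMap.mul F (Module.End F D)).compl₁₂ β α)
      (comul (R := F) z) = counit (R := F) z • (1 : Module.End F D)) (t : H ⊗[F] D) :
    tw β (tw α t) = t := by
  induction t with
  | zero => simp
  | add x y hx hy => simp [hx, hy]
  | tmul z f =>
    have key := sum_tmul_tmul_eq (ℛ F z) (fun i => ℛ F ((ℛ F z).left i))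
      (fun i => ℛ F ((ℛ F z).right i))
    have h2 := congrArg (LinearMap.lTensor H (TensorProduct.lift
      (((LinearMap.mul F (Module.End F D)).compl₁₂ β α).compr₂ (LinearMap.applyₗ f)))) key
    simp only [map_sum, LinearMap.lTensor_tmul, TensorProduct.lift.tmul, LinearMap.compr₂_apply,
      LinearMap.compl₁₂_apply, LinearMap.mul_apply', LinearMap.applyₗ_apply_apply,
      Module.End.mul_apply] at h2
    rw [tw_tmul α (ℛ F z), map_sum]
    simp only [tw_tmul β (ℛ F ((ℛ F z).left _))]
    rw [h2]
    have h3 : ∀ y : H, ∑ j ∈ (ℛ F y).index, β ((ℛ F y).left j) (α ((ℛ F y).right j) f)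
        = counit (R := F) y • f := by
      intro y
      have := congrArg (fun g : Module.End F D => g f) (h y)
      rw [← (ℛ F y).eq] at this
      simpa [map_sum, LinearMap.sum_apply] using this
    simp only [← TensorProduct.tmul_sum, h3]
    simp only [TensorProduct.tmul_smul, TensorProduct.smul_tmul', ← TensorProduct.sum_tmul]
    congr 1
    have := congrArg (TensorProduct.rid F H) (sum_tmul_counit_eq (ℛ F z))
    simpa only [map_sum, TensorProduct.rid_tmul, one_smul] using this

/-- a tensor in `H ⊗ H^*` vanishing under all evaluations is zero -/
theorem eq_zero_of_eval [FiniteDimensional F H] (t : H ⊗[F] (H →ₗ[F] F))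
    (h : ∀ x : H, (LinearMap.applyₗ (R := F) (M₂ := F) x).lTensor H t = 0) : t = 0 := by
  apply (dualTensorHomEquiv F H H).injective.comp
    (TensorProduct.comm F H (H →ₗ[F] F)).injective
  simp only [Function.comp, map_zero]
  ext x
  have h1 := congrArg (TensorProduct.rid F H) (h x)
  rw [map_zero] at h1
  rw [LinearMap.zero_apply, ← h1]
  clear h1 h
  induction t with
  | zero => simp
  | add a b ha hb => simp only [map_add, LinearMap.add_apply, ha, hb]
  | tmul z f => simp [dualTensorHomEquiv]

/-- a₁ ⊗ S(a₂) a₃ = a ⊗ 1 -/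
theorem sw1 (a : H) : ∑ i ∈ (ℛ F a).index,
    ((antipode F).lTensor H (comul (R := F) ((ℛ F a).left i))) * (1 ⊗ₜ[F] (ℛ F a).right i)
     = a ⊗ₜ[F] (1 : H) := by
  have key := sum_tmul_tmul_eq (ℛ F a) (fun i => ℛ F ((ℛ F a).left i))
      (fun i => ℛ F ((ℛ F a).right i))
  have h2 := congrArg (LinearMap.lTensor H (LinearMap.mul' F H ∘ₗ (antipode F).rTensor H)) key
  simp only [map_sum, LinearMap.lTensor_tmul, LinearMap.comp_apply, LinearMap.rTensor_tmul,
    LinearMap.mul'_apply] at h2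
  have h1 : ∀ (y w : H), (antipode F).lTensor H (comul (R := F) y) * (1 ⊗ₜ[F] w) =
      ∑ j ∈ (ℛ F y).index, (ℛ F y).left j ⊗ₜ[F] (antipode F ((ℛ F y).right j) * w) := by
    intro y w
    conv_lhs => rw [← (ℛ F y).eq]
    simp [map_sum, Finset.sum_mul]
  simp only [h1]
  rw [h2]
  simp only [← TensorProduct.tmul_sum, sum_antipode_mul_eq_smul]
  simp only [TensorProduct.tmul_smul, TensorProduct.smul_tmul', ← TensorProduct.sum_tmul]
  congr 1
  have := congrArg (TensorProduct.rid F H) (sum_tmul_counit_eq (ℛ F a))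
  simpa only [map_sum, TensorProduct.rid_tmul, one_smul] using this

/-- S(a₁) a₂ ⊗ a₃ = 1 ⊗ a -/
theorem sw2 (a : H) : ∑ i ∈ (ℛ F a).index,
    (antipode F ((ℛ F a).left i) ⊗ₜ[F] (1 : H)) * comul (R := F) ((ℛ F a).right i)
     = (1 : H) ⊗ₜ[F] a := by
  have key := sum_tmul_tmul_eq (ℛ F a) (fun i => ℛ F ((ℛ F a).left i))
      (fun i => ℛ F ((ℛ F a).right i))
  have h2 := congrArg (LinearMap.rTensor H (LinearMap.mul' F H ∘ₗ (antipode F).rTensor H) ∘ₗ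
    (TensorProduct.assoc F H H H).symm.toLinearMap) key
  simp only [map_sum, LinearMap.rTensor_tmul, LinearMap.comp_apply, LinearEquiv.coe_coe,
    TensorProduct.assoc_symm_tmul, LinearMap.mul'_apply] at h2
  have h1 : ∀ (y w : H), (antipode F w ⊗ₜ[F] (1 : H)) * comul (R := F) y =
      ∑ j ∈ (ℛ F y).index, (antipode F w * (ℛ F y).left j) ⊗ₜ[F] ((ℛ F y).right j) := by
    intro y w
    conv_lhs => rw [← (ℛ F y).eq]
    simp [Finset.mul_sum]
  simp only [h1]
  rw [← h2]
  simp only [← TensorProduct.sum_tmul, sum_antipode_mul_eq_smul]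
  simp only [← TensorProduct.smul_tmul', ← TensorProduct.tmul_smul, ← TensorProduct.tmul_sum]
  rw [sum_counit_smul]

/-- for Λ a left integral, Λ₁ ⊗ hΛ₂ = S(h)Λ₁ ⊗ Λ₂ -/
theorem int_comul (L : H) (hL : ∀ a : H, a * L = counit (R := F) a • L) (a : H) :
    ((1 : H) ⊗ₜ[F] a) * comul (R := F) L = (antipode F a ⊗ₜ[F] (1 : H)) * comul (R := F) L := by
  rw [← sw2, Finset.sum_mul]
  simp only [mul_assoc, ← Bialgebra.comul_mul, hL, map_smul, mul_smul_comm]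
  simp only [← smul_mul_assoc, ← Finset.sum_mul]
  congr 1
  simp only [TensorProduct.smul_tmul', ← TensorProduct.sum_tmul, ← map_smul, ← map_sum]
  congr 2
  have := congrArg (TensorProduct.rid F H) (sum_tmul_counit_eq (ℛ F a))
  simpa only [map_sum, TensorProduct.rid_tmul, one_smul] using this

/-- `u ↦ f ↦ f (u * ·)` -/
noncomputable def actL : H →ₗ[F] (H →ₗ[F] F) →ₗ[F] (H →ₗ[F] F) :=
  (LinearMap.llcomp F H H F).flip ∘ₗ LinearMap.mul F H

/-- `u ↦ f ↦ f (· * u)` -/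
noncomputable def actR : H →ₗ[F] (H →ₗ[F] F) →ₗ[F] (H →ₗ[F] F) :=
  (LinearMap.llcomp F H H F).flip ∘ₗ (LinearMap.mul F H).flip

@[simp] theorem actL_apply (u x : H) (f : H →ₗ[F] F) : actL u f x = f (u * x) := rfl
@[simp] theorem actR_apply (u x : H) (f : H →ₗ[F] F) : actR u f x = f (x * u) := rfl

theorem twL (t : H ⊗[F] (H →ₗ[F] F)) :
    tw (actL ∘ₗ antipode F) (tw (actL ∘ₗ antipode F ∘ₗ antipode F) t) = t := by
  apply tw_tw
  intro z
  rw [← (ℛ F z).eq]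
  ext f x
  have h := congrArg (fun y => f (antipode F y * x)) (sum_mul_antipode_eq_smul (ℛ F z))
  simpa [map_sum, LinearMap.sum_apply, antipode_mul_antidistrib, Finset.sum_mul, mul_assoc] using h

theorem twR (t : H ⊗[F] (H →ₗ[F] F)) :
    tw (actR ∘ₗ antipode F) (tw actR t) = t := by
  apply tw_tw
  intro z
  rw [← (ℛ F z).eq]
  ext f x
  have h := congrArg (fun y => f (x * y)) (sum_antipode_mul_eq_smul (ℛ F z))
  simpa [map_sum, LinearMap.sum_apply, Finset.mul_sum, mul_assoc] using h

/-- `z ⊗ f ↦ z₁ f (S² z₂ x)` -/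
noncomputable def nu (x : H) : H ⊗[F] (H →ₗ[F] F) →ₗ[F] H :=
  (TensorProduct.rid F H).toLinearMap ∘ₗ (LinearMap.applyₗ (R := F) (M₂ := F) x).lTensor H ∘ₗ
    tw (actL ∘ₗ antipode F ∘ₗ antipode F)

/-- `u ⊗ v ↦ f (S v x) u` -/
noncomputable def phi (f : H →ₗ[F] F) (x : H) : H ⊗[F] H →ₗ[F] H :=
  (TensorProduct.rid F H).toLinearMap ∘ₗ
    (f ∘ₗ LinearMap.mulRight F x ∘ₗ antipode F).lTensor H

theorem nu_tmul (x z : H) (f : H →ₗ[F] F) :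
    nu x (z ⊗ₜ f) = phi f x ((antipode F).lTensor H (comul (R := F) z)) := by
  rw [nu, LinearMap.comp_apply, LinearMap.comp_apply, tw_tmul _ (ℛ F z)]
  conv_rhs => rw [← (ℛ F z).eq]
  simp [phi, map_sum]

theorem phi_mul_left (f : H →ₗ[F] F) (x a : H) (t : H ⊗[F] H) :
    phi f x ((a ⊗ₜ 1) * t) = a * phi f x t := by
  induction t with
  | zero => simp
  | add u v hu hv => simp only [mul_add, map_add, hu, hv]
  | tmul u v => simp [phi]

theorem phi_mul_right (f : H →ₗ[F] F) (x w : H) (t : H ⊗[F] H) :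
    phi f x (t * (1 ⊗ₜ w)) = phi (actL (antipode F w) f) x t := by
  induction t with
  | zero => simp
  | add u v hu hv => simp only [add_mul, map_add, hu, hv]
  | tmul u v => simp [phi, antipode_mul_antidistrib, mul_assoc]

theorem inv1 (a z : H) : (a ⊗ₜ[F] (1 : H)) * (antipode F).lTensor H (comul (R := F) z) =
    ∑ i ∈ (ℛ F a).index, (antipode F).lTensor H (comul (R := F) ((ℛ F a).left i * z)) *
      ((1 : H) ⊗ₜ[F] (ℛ F a).right i) := by
  let M : H ⊗[F] H →ₗ[F] H ⊗[F] H := ∑ j ∈ (ℛ F z).index,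
    TensorProduct.map (LinearMap.mulRight F ((ℛ F z).left j))
      (LinearMap.mulLeft F (antipode F ((ℛ F z).right j)))
  have hM : ∀ (c w : H), (antipode F).lTensor H (comul (R := F) (c * z)) * ((1 : H) ⊗ₜ[F] w)
      = M ((antipode F).lTensor H (comul (R := F) c) * ((1 : H) ⊗ₜ[F] w)) := by
    intro c w
    rw [Bialgebra.comul_mul]
    conv_lhs => rw [← (ℛ F z).eq, ← (ℛ F c).eq]
    conv_rhs => rw [← (ℛ F c).eq]
    simp only [M, LinearMap.sum_apply, map_sum, Finset.sum_mul, Finset.mul_sum]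
    rw [Finset.sum_comm]
    simp [antipode_mul_antidistrib, mul_assoc]
  simp only [hM, ← map_sum, sw1]
  conv_lhs => rw [← (ℛ F z).eq]
  simp [M, LinearMap.sum_apply, map_sum, Finset.mul_sum]

theorem coev {ι : Type} [Fintype ι] (b : Module.Basis ι F H) (c : H) :
    ∑ k, (c * b k) ⊗ₜ[F] b.coord k = ∑ k, b k ⊗ₜ[F] actL c (b.coord k) := by
  have h1 : ∀ k, (c * b k) ⊗ₜ[F] b.coord k =
      ∑ l, b l ⊗ₜ[F] (b.coord l (c * b k) • b.coord k) := by
    intro k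
    conv_lhs => rw [← b.sum_repr (c * b k)]
    rw [TensorProduct.sum_tmul]
    simp only [TensorProduct.smul_tmul, Module.Basis.coord_apply]
  simp only [h1]
  rw [Finset.sum_comm]
  refine Finset.sum_congr rfl fun l _ => ?_
  rw [← TensorProduct.tmul_sum]
  congr 1
  refine b.ext fun j => ?_
  classical
  simp [LinearMap.sum_apply, Finsupp.single_apply]

theorem nu_int {ι : Type} [Fintype ι] (b : Module.Basis ι F H) (x a : H) :
    a * nu x (∑ k, b k ⊗ₜ[F] b.coord k) =
      counit (R := F) a • nu x (∑ k, b k ⊗ₜ[F] b.coord k) := by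
  have h1 : ∀ c w : H, ∑ k, nu x ((c * b k) ⊗ₜ[F] actL (antipode F w) (b.coord k)) =
      ∑ k, nu x (b k ⊗ₜ[F] actL (c * antipode F w) (b.coord k)) := by
    intro c w
    have := congrArg (fun t => nu x ((actL (antipode F w)).lTensor H t)) (coev b c)
    simp only [map_sum, LinearMap.lTensor_tmul] at this
    rw [this]
    refine Finset.sum_congr rfl fun k _ => ?_
    congr 2
    ext y
    simp [mul_assoc]
  calc a * nu x (∑ k, b k ⊗ₜ[F] b.coord k)
      = ∑ k, ∑ i ∈ (ℛ F a).index, nu x (((ℛ F a).left i * b k) ⊗ₜ[F]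
          actL (antipode F ((ℛ F a).right i)) (b.coord k)) := by
        rw [map_sum, Finset.mul_sum]
        refine Finset.sum_congr rfl fun k _ => ?_
        rw [nu_tmul, ← phi_mul_left, inv1, map_sum]
        simp only [phi_mul_right, nu_tmul]
    _ = _ := by
        rw [Finset.sum_comm]
        simp only [h1]
        rw [Finset.sum_comm, map_sum, Finset.smul_sum]
        refine Finset.sum_congr rfl fun k _ => ?_
        rw [← map_sum, ← TensorProduct.tmul_sum, ← LinearMap.sum_apply, ← map_sum,
          sum_mul_antipode_eq_smul, map_smul, LinearMap.smul_apply, TensorProduct.tmul_smul,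
          map_smul]
        congr 3
        ext y
        simp

theorem exists_int [FiniteDimensional F H] :
    ∃ L : H, L ≠ 0 ∧ ∀ a : H, a * L = counit (R := F) a • L := by
  by_contra! hcon
  let b := Module.finBasis F H
  have h0 : ∀ x : H, nu x (∑ k, b k ⊗ₜ[F] b.coord k) = 0 := by
    intro x
    by_contra hx
    obtain ⟨a, ha⟩ := hcon _ hx
    exact ha (nu_int b x a)
  have h1 : tw (actL ∘ₗ antipode F ∘ₗ antipode F) (∑ k, b k ⊗ₜ[F] b.coord k) = 0 := by
    apply eq_zero_of_eval
    intro x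
    apply (TensorProduct.rid F H).injective
    rw [map_zero]
    exact h0 x
  have h2 := twL (∑ k, b k ⊗ₜ[F] b.coord k)
  rw [h1, map_zero] at h2
  have h3 := congrArg (fun t => TensorProduct.rid F H
    ((LinearMap.applyₗ (R := F) (M₂ := F) (1 : H)).lTensor H t)) h2
  simp only [map_zero, map_sum, LinearMap.lTensor_tmul, TensorProduct.rid_tmul,
    LinearMap.applyₗ_apply_apply, Module.Basis.coord_apply, b.sum_repr] at h3
  have := Bialgebra.nontrivial (R := F) (A := H)
  exact zero_ne_one h3

/-- `f ↦ Λ₁ f(Λ₂)` -/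
noncomputable def fm (L : H) : (H →ₗ[F] F) →ₗ[F] H :=
  (TensorProduct.rid F H).toLinearMap ∘ₗ
    (LinearMap.applyₗ (comul (R := F) L)) ∘ₗ LinearMap.lTensorHom H

theorem fm_apply (L : H) (f : H →ₗ[F] F) :
    fm L f = TensorProduct.rid F H (f.lTensor H (comul (R := F) L)) := rfl

theorem fm_actL (L : H) (hL : ∀ a : H, a * L = counit (R := F) a • L) (a : H) (f : H →ₗ[F] F) :
    fm L (actL a f) = antipode F a * fm L f := by
  have h1 : ∀ t : H ⊗[F] H, TensorProduct.rid F H ((actL a f).lTensor H t) =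
      TensorProduct.rid F H (f.lTensor H (((1 : H) ⊗ₜ[F] a) * t)) := by
    intro t
    induction t with
    | zero => simp
    | add u v hu hv => simp only [mul_add, map_add, hu, hv]
    | tmul u v => simp
  have h2 : ∀ t : H ⊗[F] H, TensorProduct.rid F H
      (f.lTensor H ((antipode F a ⊗ₜ[F] (1 : H)) * t)) =
      antipode F a * TensorProduct.rid F H (f.lTensor H t) := by
    intro t
    induction t with
    | zero => simp
    | add u v hu hv => simp only [mul_add, map_add, hu, hv]
    | tmul u v => simp
  rw [fm_apply, h1, int_comul L hL, h2, fm_apply]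

theorem fm_inj [FiniteDimensional F H] (L : H) (hL0 : L ≠ 0)
    (hL : ∀ a : H, a * L = counit (R := F) a • L) (f : H →ₗ[F] F) (hf : fm L f = 0) : f = 0 := by
  have h1 : tw actR (L ⊗ₜ[F] f) = 0 := by
    apply eq_zero_of_eval
    intro x
    apply (TensorProduct.rid F H).injective
    have h2 := fm_actL L hL x f
    rw [hf, mul_zero, fm_apply] at h2
    rw [map_zero, ← h2, tw_tmul _ (ℛ F L)]
    conv_rhs => rw [← (ℛ F L).eq]
    simp [map_sum]
  have h2 := twR (L ⊗ₜ[F] f)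
  rw [h1, map_zero] at h2
  ext x
  have h3 := congrArg (fun t => TensorProduct.rid F H
    ((LinearMap.applyₗ (R := F) (M₂ := F) x).lTensor H t)) h2
  simp only [map_zero, LinearMap.lTensor_tmul, TensorProduct.rid_tmul,
    LinearMap.applyₗ_apply_apply] at h3
  exact (smul_eq_zero.mp h3.symm).resolve_right hL0

theorem exists_form [FiniteDimensional F H] :
    ∃ l : H →ₗ[F] F, ∀ a : H, (∀ y, l (a * y) = 0) → a = 0 := by
  obtain ⟨L, hL0, hL⟩ := exists_int (F := F) (H := H)
  have hinj : Function.Injective (fm (F := F) L) :=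
    (injective_iff_map_eq_zero _).mpr (fm_inj L hL0 hL)
  have hsurj : Function.Surjective (fm (F := F) L) :=
    (LinearMap.injective_iff_surjective_of_finrank_eq_finrank
      (Subspace.dual_finrank_eq (K := F) (V := H))).mp hinj
  obtain ⟨l, hl⟩ := hsurj 1
  refine ⟨l, fun a ha => ?_⟩
  have h1 : actL a l = 0 := by
    ext y
    exact ha y
  have h2 := fm_actL L hL a l
  rw [h1, map_zero, hl, mul_one] at h2
  rw [← Module.forall_dual_apply_eq_zero_iff F]
  intro f
  have h3 := fm_actL L hL a f
  rw [← h2, zero_mul] at h3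
  have h4 := fm_inj L hL0 hL _ h3
  simpa using congrArg (fun g : H →ₗ[F] F => g 1) h4

end Frob

/-- A finite-dimensional Hopf algebra `H` over a field `F` is a Frobenius
algebra: there is a nondegenerate bilinear form `β` on `H` with `β (x*y) z = β x (y*z)`;
equivalently, there is an isomorphism of left `H`-modules `H ≅ H^∨`, where the left
`H`-action on the dual is `(h·f) k := f (k * h)`. -/
theorem stmt6
    (F : Type) [Field F] (H : Type) [Ring H] [HopfAlgebra F H] [FiniteDimensional F H] :
    (∃ β : H →ₗ[F] H →ₗ[F] F,
        (∀ x, (∀ y, β x y = 0) → x = 0) ∧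
        (∀ y, (∀ x, β x y = 0) → y = 0) ∧
        (∀ x y z, β (x * y) z = β x (y * z))) ∧
      (∃ e : H ≃ₗ[F] (H →ₗ[F] F), ∀ h x k : H, e (h * x) k = e x (k * h)) := by
  obtain ⟨l, hl⟩ := Frob.exists_form (F := F) (H := H)
  let β : H →ₗ[F] H →ₗ[F] F := (LinearMap.mul F H).compr₂ l
  have hβ : ∀ x y, β x y = l (x * y) := fun x y => rfl
  have hinj : Function.Injective β := by
    refine (injective_iff_map_eq_zero _).mpr fun x hx => hl x fun y => ?_
    rw [← hβ, hx, LinearMap.zero_apply]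
  have hsurj : Function.Surjective β :=
    (LinearMap.injective_iff_surjective_of_finrank_eq_finrank
      (Subspace.dual_finrank_eq (K := F) (V := H)).symm).mp hinj
  have hR : ∀ y, (∀ x, β x y = 0) → y = 0 := by
    intro y hy
    rw [← Module.forall_dual_apply_eq_zero_iff F]
    intro f
    obtain ⟨x, hx⟩ := hsurj f
    rw [← hx]
    exact hy x
  have hinj2 : Function.Injective β.flip := by
    refine (injective_iff_map_eq_zero _).mpr fun y hy => hR y fun x => ?_
    rw [← LinearMap.flip_apply, hy, LinearMap.zero_apply]
  refine ⟨⟨β, fun x hx => hl x hx, hR, fun x y z => ?_⟩, ?_⟩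
  · rw [hβ, hβ, mul_assoc]
  · refine ⟨LinearEquiv.ofInjectiveOfFinrankEq β.flip hinj2
      (Subspace.dual_finrank_eq (K := F) (V := H)).symm, fun h x k => ?_⟩
    simp only [LinearEquiv.ofInjectiveOfFinrankEq, LinearEquiv.trans_apply]
    change l (k * (h * x)) = l (k * h * x)
    rw [mul_assoc]
end

section
/- Let H be a finite-dimensional Hopf algebra over a field F. The set of left integrals on H — that is, of linear functionals λ : H → F such that, identifying H ⊗_F F with H, ((id_H ⊗ λ) ∘ Δ)(h) = λ(h) • 1 for all h ∈ H — is an F-linear subspace of the dual H^∨ = Hom_F(H, F) of dimension exactly 1. -/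
namespace HopfInt

open Coalgebra HopfAlgebra WithConv TensorProduct

variable {F H : Type} [Field F] [Ring H] [HopfAlgebra F H]

/-- `h ↦ ∑ h₁ f(h₂)`. -/
noncomputable def act (f : H →ₗ[F] F) : H →ₗ[F] H :=
  (TensorProduct.rid F H).toLinearMap ∘ₗ (TensorProduct.map LinearMap.id f) ∘ₗ comul

/-- the slice map `a ⊗ b ↦ f(b) a`. -/
noncomputable def sl (f : H →ₗ[F] F) : H ⊗[F] H →ₗ[F] H :=
  (TensorProduct.rid F H).toLinearMap ∘ₗ (TensorProduct.map LinearMap.id f)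

lemma sl_tmul (f : H →ₗ[F] F) (a b : H) : sl f (a ⊗ₜ[F] b) = f b • a := by simp [sl]

lemma act_eq (f : H →ₗ[F] F) (h : H) : act f h = sl f (comul h) := rfl

lemma act_repr (f : H →ₗ[F] F) {h : H} {ι : Type} (r : Repr F h ι) :
    act f h = ∑ i ∈ r.index, f (r.right i) • r.left i := by
  rw [act_eq, ← r.eq, map_sum]; simp [sl_tmul]

lemma counit_act (f : H →ₗ[F] F) (h : H) : counit (R := F) (act f h) = f h := by
  rw [act_repr f (ℛ F h)]
  conv_rhs => rw [← sum_counit_smul (ℛ F h)]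
  simp [mul_comm]

/-- `Δ (h₁ f(h₂)) = h₁ ⊗ h₂ f(h₃)`. -/
lemma comul_act (f : H →ₗ[F] F) (h : H) :
    comul (act f h) = LinearMap.lTensor H (act f) (comul (R := F) h) := by
  have h1 := congrArg (LinearMap.lTensor H (sl f)) (coassoc_apply (R := F) h)
  have h2 : LinearMap.lTensor H (act f) =
      LinearMap.lTensor H (sl f) ∘ₗ LinearMap.lTensor H (comul (R := F) (A := H)) := by
    rw [← LinearMap.lTensor_comp]; rfl
  rw [h2, LinearMap.comp_apply, ← h1, act_repr f (ℛ F h)]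
  have h3 : ∀ (t : H ⊗[F] H) (c : H), LinearMap.lTensor H (sl f)
      (TensorProduct.assoc F H H H (t ⊗ₜ[F] c)) = f c • t := by
    intro t c
    induction t with
    | zero => simp
    | tmul a b => simp [sl_tmul]
    | add a b ha hb => rw [TensorProduct.add_tmul, map_add, map_add, ha, hb, smul_add]
  conv_rhs => rw [← (ℛ F h).eq]
  simp [h3]

lemma act_act (f g : H →ₗ[F] F) (h : H) : act (g ∘ₗ act f) h = act g (act f h) := by
  rw [act_eq g, comul_act, act_eq]
  generalize comul (R := F) h = t
  induction t with
  | zero => simp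
  | tmul a b => simp [sl_tmul]
  | add a b ha hb => simp [ha, hb]

/-- the two inclusions. -/
noncomputable abbrev i1 : H →ₐ[F] H ⊗[F] H := Algebra.TensorProduct.includeLeft
noncomputable abbrev i2 : H →ₐ[F] H ⊗[F] H := Algebra.TensorProduct.includeRight

lemma inv_right (j : H →ₐ[F] H ⊗[F] H) :
    toConv j.toLinearMap * toConv (j.toLinearMap ∘ₗ antipode F) = 1 := by
  ext c
  rw [(ℛ F c).convMul_apply]
  simp [← map_mul, ← map_sum, sum_mul_antipode_eq_algebraMap_counit (ℛ F c)]

lemma inv_left (j : H →ₐ[F] H ⊗[F] H) :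
    toConv (j.toLinearMap ∘ₗ antipode F) * toConv j.toLinearMap = 1 := by
  ext c
  rw [(ℛ F c).convMul_apply]
  simp [← map_mul, ← map_sum, sum_antipode_mul_eq_algebraMap_counit (ℛ F c)]

lemma comul_eq : toConv (comul (R := F) (A := H)) =
    toConv (i1 (F := F) (H := H)).toLinearMap * toConv (i2 (F := F) (H := H)).toLinearMap := by
  ext c
  rw [(ℛ F c).convMul_apply]
  simp [(ℛ F c).eq]

lemma comul_antipode_conv : toConv (comul (R := F) (A := H) ∘ₗ antipode F) =
    toConv (i2 (F := F) (H := H).toLinearMap ∘ₗ antipode F) *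
    toConv (i1 (F := F) (H := H).toLinearMap ∘ₗ antipode F) := by
  refine (left_inv_eq_right_inv (a := toConv (comul (R := F) (A := H))) ?_
    LinearMap.comul_right_inv).symm
  rw [comul_eq, mul_assoc, ← mul_assoc (toConv (i1.toLinearMap ∘ₗ antipode F)), inv_left, one_mul,
    inv_left]

lemma comul_antipode {h : H} {ι : Type} (r : Repr F h ι) :
    comul (R := F) (antipode F h) =
      ∑ i ∈ r.index, antipode F (r.right i) ⊗ₜ[F] antipode F (r.left i) := by
  have := congrArg (fun t => t.ofConv h) (comul_antipode_conv (F := F) (H := H))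
  simp only [r.convMul_apply] at this
  simpa using this

lemma key1 {h : H} {ι : Type} (r : Repr F h ι) :
    ∑ i ∈ r.index, comul (R := F) (antipode F (r.left i)) * (r.right i ⊗ₜ[F] 1) =
      1 ⊗ₜ[F] antipode F h := by
  have h0 : toConv (comul (R := F) (A := H) ∘ₗ antipode F) *
      toConv (i1 (F := F) (H := H)).toLinearMap =
      toConv (i2 (F := F) (H := H).toLinearMap ∘ₗ antipode F) := by
    rw [comul_antipode_conv, mul_assoc, inv_left, mul_one]
  have := congrArg (fun t => t.ofConv h) h0
  simp only [r.convMul_apply] at this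
  simpa using this

/-- `f · h`, `x ↦ f (x S(h))`. -/
noncomputable def tw (f : H →ₗ[F] F) (h : H) : H →ₗ[F] F :=
  f ∘ₗ LinearMap.mulRight F (antipode F h)

@[simp] lemma tw_apply (f : H →ₗ[F] F) (h x : H) : tw f h x = f (x * antipode F h) := rfl

lemma sl_mul_left (f : H →ₗ[F] F) (t : H ⊗[F] H) (k : H) :
    sl f (t * (k ⊗ₜ[F] 1)) = sl f t * k := by
  induction t with
  | zero => simp
  | tmul a b => simp [sl_tmul]
  | add a b ha hb => simp [add_mul, ha, hb]

lemma sl_mul_right (f : H →ₗ[F] F) (t : H ⊗[F] H) (k : H) :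
    sl f (t * (1 ⊗ₜ[F] antipode F k)) = sl (tw f k) t := by
  induction t with
  | zero => simp
  | tmul a b => simp [sl_tmul]
  | add a b ha hb => simp [add_mul, ha, hb]

/-- Hopf module compatibility. -/
lemma act_tw (f : H →ₗ[F] F) (x : H) {h : H} {ι : Type} (r : Repr F h ι) :
    act (tw f h) x = ∑ i ∈ r.index, act f (x * antipode F (r.left i)) * r.right i := by
  rw [act_eq, ← sl_mul_right, ← key1 r, Finset.mul_sum, map_sum]
  refine Finset.sum_congr rfl fun i _ => ?_
  rw [← mul_assoc, sl_mul_left, ← Bialgebra.comul_mul]; rfl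

section basis

variable {n : ℕ} (b : Module.Basis (Fin n) F H)

lemma lin_exp {V : Type} [AddCommGroup V] [Module F V] (φ : H →ₗ[F] V) (w : H) :
    φ w = ∑ k, b.coord k w • φ (b k) := by
  conv_lhs => rw [← b.sum_repr w]
  rw [map_sum]
  simp only [map_smul, Module.Basis.coord_apply]

lemma sum_coord (A : H →ₗ[F] H) (t : H ⊗[F] H) :
    ∑ i, sl (b.coord i) t ⊗ₜ[F] A (b i) = LinearMap.lTensor H A t := by
  induction t with
  | zero => simp
  | tmul x y =>
    rw [LinearMap.lTensor_tmul, lin_exp b A y, TensorProduct.tmul_sum]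
    simp [sl_tmul, TensorProduct.smul_tmul]
  | add x y hx hy => simp only [map_add, ← hx, ← hy, TensorProduct.add_tmul, Finset.sum_add_distrib]

/-- representation of `Δ h` in a basis. -/
noncomputable def br (h : H) : Repr F h (Fin n) where
  index := Finset.univ
  left i := act (b.coord i) h
  right i := b i
  eq := by simpa [act_eq] using sum_coord b LinearMap.id (comul h)

/-- representation of `Δ (S h)` in a basis. -/
noncomputable def brS (h : H) : Repr F (antipode F h) (Fin n) where
  index := Finset.univ
  left i := antipode F (b i)
  right i := antipode F (act (b.coord i) h)
  eq := (comul_antipode (br b h)).symm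

/-- projection to integrals -/
noncomputable def E (f : H →ₗ[F] F) : H →ₗ[F] F :=
  ∑ i, tw (b.coord i ∘ₗ act f) (antipode F (b i))

lemma act_sum {ι : Type} (s : Finset ι) (f : ι → H →ₗ[F] F) (x : H) :
    act (∑ i ∈ s, f i) x = ∑ i ∈ s, act (f i) x := by
  rw [act_repr _ (ℛ F x)]
  simp only [act_repr _ (ℛ F x), LinearMap.sum_apply, Finset.sum_smul]
  rw [Finset.sum_comm]

lemma E_apply (f : H →ₗ[F] F) (x : H) :
    E b f x = ∑ i, b.coord i (act f (x * antipode F (antipode F (b i)))) := by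
  simp [E]

lemma act_E (f : H →ₗ[F] F) (x : H) : act (E b f) x = E b f x • (1 : H) := by
  have h1 : ∀ i, act (tw (b.coord i ∘ₗ act f) (antipode F (b i))) x =
      ∑ j, act (b.coord i) (act f (x * antipode F (antipode F (b j)))) *
        antipode F (act (b.coord j) (b i)) := by
    intro i
    rw [act_tw _ _ (brS b (b i))]
    simp only [act_act]
    rfl
  rw [E, act_sum, ← E, E_apply, Finset.sum_smul]
  simp only [h1]
  rw [Finset.sum_comm]
  refine Finset.sum_congr rfl fun j _ => ?_
  generalize act f (x * antipode F (antipode F (b j))) = y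
  have h2 := mul_antipode_lTensor_comul_apply (R := F) (act (b.coord j) y)
  rw [comul_act, ← sum_coord b (act (b.coord j)), counit_act] at h2
  simpa [act_eq _ y, Algebra.algebraMap_eq_smul_one] using h2

lemma sum_E (f : H →ₗ[F] F) (x : H) :
    ∑ i, E b (b.coord i ∘ₗ act f) (x * antipode F (b i)) = f x := by
  have h1 : ∀ k, ∑ i, antipode F (act (b.coord i) (b k)) * b i =
      counit (R := F) (b k) • (1 : H) := fun k => sum_antipode_mul_eq_smul (br b (b k))
  have h2 : ∀ (i j : Fin n) (w : H), b.coord j (act (b.coord i) w) =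
      ∑ k, b.coord k w * b.coord j (act (b.coord i) (b k)) := by
    intro i j w
    exact lin_exp b (b.coord j ∘ₗ act (b.coord i)) w
  let B : H →ₗ[F] H := act f ∘ₗ LinearMap.mulLeft F x ∘ₗ antipode F
  have hB : ∀ k, B k = act f (x * antipode F k) := fun k => rfl
  have h3 : ∀ i j, act (b.coord i ∘ₗ act f) (x * antipode F (b i) * antipode F (antipode F (b j)))
      = act (b.coord i) (B (antipode F (b j) * b i)) := by
    intro i j
    rw [act_act, hB, antipode_mul_antidistrib, mul_assoc]
  have h4 : f x = ∑ k, b.coord k (B (counit (R := F) (b k) • 1)) := by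
    rw [← counit_act f x]
    rw [lin_exp b counit (act f x)]
    simp [hB, mul_comm]
  rw [h4]
  simp only [E_apply, h3]
  simp only [← h1, map_sum]
  have h5 : ∀ k i, b.coord k (B (antipode F (act (b.coord i) (b k)) * b i)) =
     ∑ j, b.coord k (B (antipode F (b j) * b i)) * b.coord j (act (b.coord i) (b k)) := by
    intro k i
    rw [show b.coord k (B (antipode F (act (b.coord i) (b k)) * b i)) =
      (b.coord k ∘ₗ B ∘ₗ LinearMap.mulRight F (b i) ∘ₗ antipode F) (act (b.coord i) (b k)) from rfl,
      lin_exp b]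
    simp [mul_comm]
  conv_rhs => rw [Finset.sum_comm]
  refine Finset.sum_congr rfl fun i _ => ?_
  rw [Finset.sum_congr rfl fun j _ => h2 i j _, Finset.sum_comm]
  exact Finset.sum_congr rfl fun k _ => (h5 k i).symm

lemma exists_int : ∃ f : H →ₗ[F] F, E b f ≠ 0 := by
  by_contra hc
  push Not at hc
  have := sum_E b (counit (R := F) (A := H)) 1
  simp [hc] at this

lemma act_tw_int {l : H →ₗ[F] F} (hi : ∀ h, act l h = l h • (1 : H)) (h x : H) (j : Fin n) :
    b.coord j (act (tw l h) x) = tw l (act (b.coord j) h) x := by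
  have h1 : act (tw l h) x = ∑ i, tw l (act (b.coord i) h) x • b i := by
    rw [act_tw l x (br b h)]
    refine Finset.sum_congr rfl fun i _ => ?_
    rw [hi, smul_mul_assoc, one_mul]
    rfl
  rw [h1]
  simp only [Module.Basis.coord_apply, b.repr_sum_self]

lemma tw_inj (b : Module.Basis (Fin n) F H) {l : H →ₗ[F] F} (hl : l ≠ 0) (hi : ∀ h, act l h = l h • (1 : H)) {h : H}
    (hh : tw l h = 0) : h = 0 := by
  have h1 : ∀ k, tw l k = 0 → ∀ j, tw l (act (b.coord j) k) = 0 := by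
    intro k hk j
    ext x
    rw [← act_tw_int b hi, hk]
    simp [act]
  have h2 : ∀ k, tw l k = 0 → counit (R := F) k = 0 := by
    intro k hk
    by_contra hc
    apply hl
    ext x
    have h3 := congrArg (fun z => l (x * antipode F z)) (sum_mul_antipode_eq_smul (br b k))
    have h4 : ∀ j y, l (y * antipode F (act (b.coord j) k)) = 0 := fun j y => by
      rw [← tw_apply, h1 k hk j]; rfl
    simp [br, antipode_mul_antidistrib, Finset.mul_sum, ← mul_assoc, h4, hc] at h3
    simpa using h3
  rw [← b.sum_repr h]
  refine Finset.sum_eq_zero fun j _ => ?_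
  have := h2 _ (h1 h hh j)
  rw [counit_act, Module.Basis.coord_apply] at this
  rw [this, zero_smul]

/-- `h ↦ f · h` as a linear map. -/
noncomputable def twL (l : H →ₗ[F] F) : H →ₗ[F] (H →ₗ[F] F) where
  toFun := tw l
  map_add' a c := by ext x; simp [mul_add]
  map_smul' a c := by ext x; simp

lemma uniq (b : Module.Basis (Fin n) F H) [FiniteDimensional F H] {l : H →ₗ[F] F} (hl : l ≠ 0)
    (hi : ∀ h, act l h = l h • (1 : H))
    (l' : H →ₗ[F] F) (hi' : ∀ h, act l' h = l' h • (1 : H)) : ∃ c : F, l' = c • l := by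
  have inj : Function.Injective (twL l) :=
    (injective_iff_map_eq_zero _).2 fun h hh => tw_inj b hl hi hh
  have surj : Function.Surjective (twL l) :=
    (LinearMap.injective_iff_surjective_of_finrank_eq_finrank
      (Subspace.dual_finrank_eq (K := F) (V := H)).symm).1 inj
  obtain ⟨h, rfl⟩ := surj l'
  refine ⟨counit (R := F) h, ?_⟩
  have h1 : ∀ j, act (b.coord j) h = b.coord j 1 • h := by
    intro j
    apply inj
    rw [map_smul]
    ext x
    have h2 := act_tw_int b hi h x j
    have h3 : act (tw l h) x = tw l h x • (1 : H) := hi' x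
    rw [h3, map_smul] at h2
    exact h2.symm.trans (mul_comm _ _)
  have h4 : h = counit (R := F) h • (1 : H) := by
    apply b.ext_elem
    intro j
    have h5 := congrArg (counit (R := F)) (h1 j)
    rw [counit_act, map_smul] at h5
    rw [map_smul]
    exact h5.trans (mul_comm _ _)
  rw [h4, map_smul]
  ext x
  simp [twL]

end basis

end HopfInt

/-- For a finite-dimensional Hopf algebra `H` over a field `F`, the space
of left integrals on `H` — functionals `l : H → F` with `((id_H ⊗ l) ∘ Δ) h = l h • 1`
(identifying `H ⊗[F] F` with `H`) — is a one-dimensional subspace of the dual `H^∨`: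
there is a nonzero left integral `l₀` and every left integral is a scalar multiple
of `l₀`. -/
theorem stmt7
    (F : Type) [Field F] (H : Type) [Ring H] [HopfAlgebra F H] [FiniteDimensional F H] :
    ∃ l₀ : H →ₗ[F] F, l₀ ≠ 0 ∧
      (∀ h : H,
        (TensorProduct.rid F H) ((TensorProduct.map LinearMap.id l₀)
          (Coalgebra.comul (R := F) h)) = l₀ h • (1 : H)) ∧
      (∀ l : H →ₗ[F] F,
        (∀ h : H,
          (TensorProduct.rid F H) ((TensorProduct.map LinearMap.id l)
            (Coalgebra.comul (R := F) h)) = l h • (1 : H)) →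
        ∃ c : F, l = c • l₀) := by
  obtain ⟨f, hf⟩ := HopfInt.exists_int (Module.finBasis F H)
  exact ⟨_, hf, HopfInt.act_E _ f, HopfInt.uniq (Module.finBasis F H) hf (HopfInt.act_E _ f)⟩
end

section
/- Let 0 → U →i V →p W → 0 be a short exact sequence of abelian groups in which U and W are free ℤ-modules of finite ranks m and n respectively (hence V is free of rank m+n). Then the assignment sending (u₁ ∧ ⋯ ∧ u_m) ⊗ (w₁ ∧ ⋯ ∧ w_n) to i(u₁) ∧ ⋯ ∧ i(u_m) ∧ v₁ ∧ ⋯ ∧ v_n ∈ Λ^{m+n} V, where each v_j ∈ V is an arbitrary preimage of w_j under p, is independent of the choice of preimages and induces a well-defined isomorphism of abelian groups Λ^m U ⊗_ℤ Λ^n W ≅ Λ^{m+n} V between the top exterior powers. -/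
open scoped TensorProduct

/-- The top exterior power of a free module with basis indexed by `Fin k`. -/
noncomputable def topEquiv {R M : Type} [CommRing R] [AddCommGroup M] [Module R M] {k : ℕ}
    (b : Module.Basis (Fin k) R M) : (⋀[R]^k M) ≃ₗ[R] R :=
  LinearEquiv.ofLinearMap (exteriorPower.alternatingMapLinearEquiv b.det)
    (LinearMap.toSpanSingleton R _ (exteriorPower.ιMulti R k b))
    (by
      ext
      simp [Module.Basis.det_self])
    (by
      apply exteriorPower.linearMap_ext
      apply Module.Basis.ext_alternating b
      intro v hv
      obtain ⟨σ, rfl⟩ : ∃ σ : Equiv.Perm (Fin k), (σ : Fin k → Fin k) = v :=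
        ⟨Equiv.ofBijective v (Finite.injective_iff_bijective.mp hv), rfl⟩
      have h1 := (exteriorPower.ιMulti R k (M := M)).map_perm b σ
      have h2 := b.det.map_perm b σ
      simp only [Function.comp_def, Module.Basis.det_self] at h1 h2
      simp [h1, h2, Module.Basis.det_self, LinearMap.toSpanSingleton_apply])

theorem topEquiv_apply {R M : Type} [CommRing R] [AddCommGroup M] [Module R M] {k : ℕ}
    (b : Module.Basis (Fin k) R M) (x : Fin k → M) :
    topEquiv b (exteriorPower.ιMulti R k x) = b.det x := by
  simp [topEquiv]

theorem exists_basis {R U V W : Type} [CommRing R] [AddCommGroup U] [Module R U] [AddCommGroup V] [Module R V]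
    [AddCommGroup W] [Module R W] {m n : ℕ}
    (bU : Module.Basis (Fin m) R U) (bW : Module.Basis (Fin n) R W)
    (i : U →ₗ[R] V) (p : V →ₗ[R] W)
    (hi : Function.Injective i) (hp : Function.Surjective p)
    (hip : LinearMap.range i = LinearMap.ker p) :
    ∃ b : Module.Basis (Fin m ⊕ Fin n) R V,
      (∀ u j, b.repr (i u) (Sum.inl j) = bU.repr u j) ∧
      (∀ v j, b.repr v (Sum.inr j) = bW.repr (p v) j) := by
  have : Module.Free R W := Module.Free.of_basis bW
  obtain ⟨s, hs⟩ := Module.projective_lifting_property p LinearMap.id hp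
  have hs' : ∀ w, p (s w) = w := fun w => LinearMap.congr_fun hs w
  have hpi : ∀ u, p (i u) = 0 := fun u => by
    have : i u ∈ LinearMap.ker p := hip ▸ LinearMap.mem_range_self i u
    simpa using this
  let f : (U × W) →ₗ[R] V := i.coprod s
  have hf : Function.Bijective f := by
    constructor
    · rw [injective_iff_map_eq_zero]
      rintro ⟨u, w⟩ h
      have h1 : i u + s w = 0 := by simpa [f] using h
      have hw : w = 0 := by
        have := congrArg p h1
        simpa [hpi, hs'] using this
      subst hw
      have : u = 0 := hi (by simpa using h1)
      simp [this]
    · intro v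
      have : v - s (p v) ∈ LinearMap.range i := by
        rw [hip]; simp [hs']
      obtain ⟨u, hu⟩ := this
      exact ⟨(u, p v), by simp [f, hu]⟩
  let e := LinearEquiv.ofBijective f hf
  have hpe : ∀ v, (e.symm v).2 = p v := by
    intro v
    obtain ⟨⟨u, w⟩, rfl⟩ := e.surjective v
    rw [LinearEquiv.symm_apply_apply]
    simp [e, f, hpi, hs']
  have hie : ∀ u, e.symm (i u) = (u, 0) := by
    intro u
    rw [LinearEquiv.symm_apply_eq]
    simp [e, f]
  refine ⟨(bU.prod bW).map e, ?_, ?_⟩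
  · intro u j
    simp [hie]
  · intro v j
    simp [hpe]

theorem det_append {R U V W : Type} [CommRing R] [AddCommGroup U] [Module R U] [AddCommGroup V] [Module R V]
    [AddCommGroup W] [Module R W] {m n : ℕ}
    (bU : Module.Basis (Fin m) R U) (bW : Module.Basis (Fin n) R W)
    (i : U →ₗ[R] V) (p : V →ₗ[R] W) (hpi : ∀ u, p (i u) = 0)
    (b : Module.Basis (Fin m ⊕ Fin n) R V)
    (h1 : ∀ u j, b.repr (i u) (Sum.inl j) = bU.repr u j)
    (h2 : ∀ v j, b.repr v (Sum.inr j) = bW.repr (p v) j)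
    (u : Fin m → U) (v : Fin n → V) :
    (b.reindex finSumFinEquiv).det (Fin.append (i ∘ u) v) = bU.det u * bW.det (p ∘ v) := by
  rw [Module.Basis.det_reindex, Module.Basis.det_apply, Module.Basis.det_apply,
    Module.Basis.det_apply]
  rw [← Matrix.det_fromBlocks_zero₂₁ (bU.toMatrix u)
    (Matrix.of fun j k => b.repr (v k) (Sum.inl j)) (bW.toMatrix (p ∘ v))]
  congr 1
  ext (j | j) (k | k) <;> simp [Module.Basis.toMatrix_apply, h1, h2, hpi]

/-- Let `0 → U →i V →p W → 0` be a short exact sequence of abelian groups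
with `U` and `W` free `ℤ`-modules of finite ranks `m` and `n`.  Then there is a
well-defined isomorphism `Λ^m U ⊗ Λ^n W ≅ Λ^{m+n} V` sending
`(u₁ ∧ ⋯ ∧ u_m) ⊗ (p v₁ ∧ ⋯ ∧ p v_n)` to `i u₁ ∧ ⋯ ∧ i u_m ∧ v₁ ∧ ⋯ ∧ v_n`, for every
choice of preimages `v_j ∈ V` (independence of the choice of preimages is expressed by
quantifying over all `v : Fin n → V`, since `p` is surjective). -/
theorem stmt8
    (U V W : Type) [AddCommGroup U] [Module ℤ U] [AddCommGroup V] [Module ℤ V]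
    [AddCommGroup W] [Module ℤ W] (m n : ℕ)
    (hUfree : Module.Free ℤ U) (hUfin : Module.Finite ℤ U)
    (hUrank : Module.finrank ℤ U = m)
    (hWfree : Module.Free ℤ W) (hWfin : Module.Finite ℤ W)
    (hWrank : Module.finrank ℤ W = n)
    (i : U →ₗ[ℤ] V) (p : V →ₗ[ℤ] W)
    (hi : Function.Injective i) (hp : Function.Surjective p)
    (hip : LinearMap.range i = LinearMap.ker p) :
    ∃ e : ((⋀[ℤ]^m U) ⊗[ℤ] (⋀[ℤ]^n W)) ≃ₗ[ℤ] (⋀[ℤ]^(m + n) V),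
      ∀ (u : Fin m → U) (v : Fin n → V),
        e ((⟨ExteriorAlgebra.ιMulti ℤ m u,
              ExteriorAlgebra.ιMulti_range ℤ m (Set.mem_range_self u)⟩ : ⋀[ℤ]^m U) ⊗ₜ[ℤ]
            (⟨ExteriorAlgebra.ιMulti ℤ n (p ∘ v),
              ExteriorAlgebra.ιMulti_range ℤ n (Set.mem_range_self (p ∘ v))⟩ : ⋀[ℤ]^n W))
          = (⟨ExteriorAlgebra.ιMulti ℤ (m + n) (Fin.append (i ∘ u) v),
              ExteriorAlgebra.ιMulti_range ℤ (m + n)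
                (Set.mem_range_self (Fin.append (i ∘ u) v))⟩ : ⋀[ℤ]^(m + n) V) := by
  have bU : Module.Basis (Fin m) ℤ U := Module.finBasisOfFinrankEq ℤ U hUrank
  have bW : Module.Basis (Fin n) ℤ W := Module.finBasisOfFinrankEq ℤ W hWrank
  obtain ⟨b, h1, h2⟩ := exists_basis bU bW i p hi hp hip
  have hpi : ∀ u, p (i u) = 0 := fun u => by
    have : i u ∈ LinearMap.ker p := hip ▸ LinearMap.mem_range_self i u
    simpa using this
  refine ⟨(TensorProduct.congr (topEquiv bU) (topEquiv bW)).trans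
    ((TensorProduct.lid ℤ ℤ).trans (topEquiv (b.reindex finSumFinEquiv)).symm), ?_⟩
  intro u v
  change ((TensorProduct.congr (topEquiv bU) (topEquiv bW)).trans
    ((TensorProduct.lid ℤ ℤ).trans (topEquiv (b.reindex finSumFinEquiv)).symm))
      (exteriorPower.ιMulti ℤ m u ⊗ₜ[ℤ] exteriorPower.ιMulti ℤ n (p ∘ v)) =
      exteriorPower.ιMulti ℤ (m + n) (Fin.append (i ∘ u) v)
  rw [LinearEquiv.trans_apply, LinearEquiv.trans_apply, LinearEquiv.symm_apply_eq,
    topEquiv_apply, det_append bU bW i p hpi b h1 h2, TensorProduct.congr_tmul,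
    topEquiv_apply, topEquiv_apply, TensorProduct.lid_tmul, smul_eq_mul]
end
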